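/- arXiv:2209.11684 — 4 statements merged into one kernel-verified Lean document; each statement's English description precedes it below -/
import Mathlib

section
/- Let Φ : M_d → M_d be a unital quantum channel, Φ* its adjoint with respect to the trace inner product, and let ρ, ω be positive definite density matrices. Then D(ρ ‖ Φ*Φ(ω)) ≤ (H(ρ) − H(Φ(ρ))) + D(ρ ‖ ω), where D(ρ‖σ) = tr(ρ log ρ − ρ log σ) is the quantum relative entropy and H(ρ) = tr(ρ log ρ). -/
open Matrix
open scoped ComplexOrder

noncomputable section

variable {d : ℕ}

/-- Matrix logarithm of a Hermitian matrix via spectral decomposition (junk value `0`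
otherwise). -/
def mlog (A : Matrix (Fin d) (Fin d) ℂ) : Matrix (Fin d) (Fin d) ℂ :=
  if hA : A.IsHermitian then
    (hA.eigenvectorUnitary : Matrix (Fin d) (Fin d) ℂ) *
      Matrix.diagonal (fun i => (Real.log (hA.eigenvalues i) : ℂ)) *
      star (hA.eigenvectorUnitary : Matrix (Fin d) (Fin d) ℂ)
  else 0

/-- The ampliation `id_n ⊗ Φ` acting on block matrices. -/
def ampliation (Φ : Matrix (Fin d) (Fin d) ℂ →ₗ[ℂ] Matrix (Fin d) (Fin d) ℂ) (n : ℕ)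
    (M : Matrix (Fin n × Fin d) (Fin n × Fin d) ℂ) : Matrix (Fin n × Fin d) (Fin n × Fin d) ℂ :=
  fun p q => Φ (Matrix.of fun a b => M (p.1, a) (q.1, b)) p.2 q.2

/-- Complete positivity. -/
def IsCompletelyPositive (Φ : Matrix (Fin d) (Fin d) ℂ →ₗ[ℂ] Matrix (Fin d) (Fin d) ℂ) : Prop :=
  ∀ n : ℕ, ∀ M : Matrix (Fin n × Fin d) (Fin n × Fin d) ℂ,
    M.PosSemidef → (ampliation Φ n M).PosSemidef

/-- The entropy functional `H(ρ) = tr(ρ log ρ)`. -/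
def vnEnt (A : Matrix (Fin d) (Fin d) ℂ) : ℝ := ((A * mlog A).trace).re

/-- Quantum relative entropy `D(ρ‖σ) = tr(ρ log ρ − ρ log σ)`. -/
def relEnt (ρ σ : Matrix (Fin d) (Fin d) ℂ) : ℝ := ((ρ * mlog ρ - ρ * mlog σ).trace).re

lemma sum_mul_log_le_sum_mul_log {ι κ : Type*} [Fintype ι] [Fintype κ]
    {w a : ι → ℝ} {v b : κ → ℝ} (ha : ∀ i, 0 < a i) (hb : ∀ k, 0 < b k)
    (hsum : ∑ i, w i = ∑ k, v k)
    (h : ∀ t : ℝ, 0 ≤ t → ∑ i, w i / (a i + t) ≤ ∑ k, v k / (b k + t)) :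
    ∑ k, v k * Real.log (b k) ≤ ∑ i, w i * Real.log (a i) := by
  set g : ℝ → ℝ := fun t =>
    ∑ i, w i * Real.log (t + a i) - ∑ k, v k * Real.log (t + b k) with hg
  have hderiv : ∀ t : ℝ, 0 ≤ t →
      HasDerivAt g (∑ i, w i / (a i + t) - ∑ k, v k / (b k + t)) t := by
    intro t ht
    refine HasDerivAt.sub ?_ ?_
    · refine HasDerivAt.fun_sum fun i _ => ?_
      have := ((hasDerivAt_id t).add_const (a i)).log (by have := ha i; simp; positivity)
      simpa [div_eq_mul_inv, add_comm] using this.const_mul (w i)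
    · refine HasDerivAt.fun_sum fun i _ => ?_
      have := ((hasDerivAt_id t).add_const (b i)).log (by have := hb i; simp; positivity)
      simpa [div_eq_mul_inv, add_comm] using this.const_mul (v i)
  have hanti : AntitoneOn g (Set.Ici 0) := by
    refine antitoneOn_of_deriv_nonpos (convex_Ici 0)
      (fun t ht => (hderiv t ht).continuousAt.continuousWithinAt) ?_ ?_
    · intro t ht
      rw [interior_Ici] at ht
      exact (hderiv t ht.le).differentiableAt.differentiableWithinAt
    · intro t ht
      rw [interior_Ici] at ht
      rw [(hderiv t ht.le).deriv]
      linarith [h t ht.le]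
  have hlim : Filter.Tendsto g Filter.atTop (nhds 0) := by
    have h1 : Filter.Tendsto (fun t : ℝ =>
        ∑ i, w i * (Real.log (t + a i) - Real.log t)
          - ∑ k, v k * (Real.log (t + b k) - Real.log t)) Filter.atTop
        (nhds (∑ i, w i * 0 - ∑ k, v k * 0)) :=
      (tendsto_finsetSum _ fun i _ =>
        (Real.tendsto_log_comp_add_sub_log (a i)).const_mul (w i)).sub
      (tendsto_finsetSum _ fun k _ =>
        (Real.tendsto_log_comp_add_sub_log (b k)).const_mul (v k))
    simp only [mul_zero, Finset.sum_const_zero, sub_zero] at h1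
    refine h1.congr fun t => ?_
    simp only [mul_sub, Finset.sum_sub_distrib, ← Finset.sum_mul, hsum, hg]
    ring
  have h0 : 0 ≤ g 0 := by
    refine le_of_tendsto hlim ?_
    filter_upwards [Filter.eventually_ge_atTop (0 : ℝ)] with t ht
    exact hanti Set.self_mem_Ici ht ht
  simpa [hg] using h0

lemma IsCompletelyPositive.posSemidef_blocks
    {Φ : Matrix (Fin d) (Fin d) ℂ →ₗ[ℂ] Matrix (Fin d) (Fin d) ℂ}
    (hCP : IsCompletelyPositive Φ) {n : ℕ} {ρ : Matrix (Fin d) (Fin d) ℂ} (hρ : ρ.PosSemidef)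
    (K : Fin n → Matrix (Fin d) (Fin d) ℂ) :
    (Matrix.of fun p q : Fin n × Fin d => Φ ((K p.1)ᴴ * ρ * K q.1) p.2 q.2).PosSemidef :=
  hCP n _ (hρ.conjTranspose_mul_mul_same (Matrix.of fun a (p : Fin n × Fin d) => K p.1 a p.2))

lemma IsCompletelyPositive.map_conjTranspose
    {Φ : Matrix (Fin d) (Fin d) ℂ →ₗ[ℂ] Matrix (Fin d) (Fin d) ℂ}
    (hCP : IsCompletelyPositive Φ) (X : Matrix (Fin d) (Fin d) ℂ) : Φ Xᴴ = (Φ X)ᴴ := by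
  have h := (hCP.posSemidef_blocks Matrix.PosSemidef.one ![1, X]).isHermitian
  ext a b
  simpa using (congrFun (congrFun h (1, a)) (0, b)).symm

lemma IsCompletelyPositive.sum_trace_nonneg
    {Φ : Matrix (Fin d) (Fin d) ℂ →ₗ[ℂ] Matrix (Fin d) (Fin d) ℂ}
    (hCP : IsCompletelyPositive Φ) {n : ℕ} {ρ : Matrix (Fin d) (Fin d) ℂ} (hρ : ρ.PosSemidef)
    (K L : Fin n → Matrix (Fin d) (Fin d) ℂ) :
    0 ≤ ∑ i, ∑ j, (L i * Φ ((K i)ᴴ * ρ * K j) * (L j)ᴴ).trace := by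
  have h := ((hCP.posSemidef_blocks hρ K).mul_mul_conjTranspose_same
    (Matrix.of fun a (p : Fin n × Fin d) => L p.1 a p.2)).trace_nonneg
  have hsum : (Matrix.of fun a (p : Fin n × Fin d) => L p.1 a p.2) *
      (Matrix.of fun p q : Fin n × Fin d => Φ ((K p.1)ᴴ * ρ * K q.1) p.2 q.2) *
      (Matrix.of fun a (p : Fin n × Fin d) => L p.1 a p.2)ᴴ
      = ∑ j, ∑ i, L i * Φ ((K i)ᴴ * ρ * K j) * (L j)ᴴ := by
    ext a b
    simp only [Matrix.mul_apply (M := _ * _), Matrix.sum_apply, Fintype.sum_prod_type,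
      Matrix.conjTranspose_apply]
    refine Finset.sum_congr rfl fun j _ => ?_
    rw [Finset.sum_comm]
    refine Finset.sum_congr rfl fun y _ => ?_
    rw [← Finset.sum_mul]
    congr 1
    simp [Matrix.mul_apply (M := L _), Matrix.mul_apply (M := Matrix.of _), Fintype.sum_prod_type]
  rw [hsum, Finset.sum_comm] at h
  simpa only [Matrix.trace_sum] using h

lemma IsCompletelyPositive.posSemidef_map
    {Φ : Matrix (Fin d) (Fin d) ℂ →ₗ[ℂ] Matrix (Fin d) (Fin d) ℂ}
    (hCP : IsCompletelyPositive Φ) {A : Matrix (Fin d) (Fin d) ℂ} (hA : A.PosSemidef) :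
    (Φ A).PosSemidef := by
  have h := (hCP.posSemidef_blocks hA (fun _ : Fin 1 => 1)).submatrix (fun a : Fin d => (0, a))
  have e : (Matrix.of fun p q : Fin 1 × Fin d =>
      Φ ((1 : Matrix (Fin d) (Fin d) ℂ)ᴴ * A * 1) p.2 q.2).submatrix
        (fun a : Fin d => ((0 : Fin 1), a)) (fun a : Fin d => (0, a)) = Φ A := by
    ext; simp
  rwa [e] at h

lemma Matrix.PosDef.exists_spectral {A : Matrix (Fin d) (Fin d) ℂ} (hA : A.PosDef) :
    ∃ (U : Matrix (Fin d) (Fin d) ℂ) (a : Fin d → ℝ), Uᴴ * U = 1 ∧ U * Uᴴ = 1 ∧ (∀ i, 0 < a i) ∧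
      A = U * diagonal (fun i => (a i : ℂ)) * Uᴴ ∧
      mlog A = U * diagonal (fun i => (Real.log (a i) : ℂ)) * Uᴴ := by
  refine ⟨hA.1.eigenvectorUnitary, hA.1.eigenvalues, ?_, ?_, hA.eigenvalues_pos, ?_, ?_⟩
  · exact Unitary.coe_star_mul_self hA.1.eigenvectorUnitary
  · exact Unitary.coe_mul_star_self hA.1.eigenvectorUnitary
  · have := hA.1.spectral_theorem
    rwa [Unitary.conjStarAlgAut_apply] at this
  · rw [mlog, dif_pos hA.1]
    rfl

lemma spectral_add_smul_one {U : Matrix (Fin d) (Fin d) ℂ} (hU : U * Uᴴ = 1) (a : Fin d → ℝ)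
    (t : ℝ) : U * diagonal (fun i => (a i : ℂ)) * Uᴴ + (t : ℂ) • 1
      = U * diagonal (fun i => ((a i + t : ℝ) : ℂ)) * Uᴴ := by
  have : diagonal (fun i => ((a i + t : ℝ) : ℂ))
      = diagonal (fun i => (a i : ℂ)) + (t : ℂ) • (1 : Matrix (Fin d) (Fin d) ℂ) := by
    rw [smul_one_eq_diagonal, diagonal_add]
    simp
  rw [this, mul_add, add_mul, mul_smul_comm, smul_mul_assoc, mul_one, hU]

lemma posDef_map_of_posSemidef_map
    {Φ : Matrix (Fin d) (Fin d) ℂ →ₗ[ℂ] Matrix (Fin d) (Fin d) ℂ}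
    (hpos : ∀ A : Matrix (Fin d) (Fin d) ℂ, A.PosSemidef → (Φ A).PosSemidef) (hunital : Φ 1 = 1)
    {A : Matrix (Fin d) (Fin d) ℂ} (hA : A.PosDef) : (Φ A).PosDef := by
  obtain ⟨U, a, -, hU, ha, hAU, -⟩ := hA.exists_spectral
  obtain ⟨ε, hε, hεa⟩ : ∃ ε : ℝ, 0 < ε ∧ ∀ i, ε ≤ a i := by
    rcases isEmpty_or_nonempty (Fin d) with h | h
    · exact ⟨1, one_pos, fun i => h.elim i⟩
    · obtain ⟨i, hi⟩ := Finite.exists_min a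
      exact ⟨a i, ha i, hi⟩
  have hpsd : (A + ((-ε : ℝ) : ℂ) • 1).PosSemidef := by
    rw [hAU, spectral_add_smul_one hU]
    refine (PosSemidef.diagonal fun i => ?_).mul_mul_conjTranspose_same U
    exact Complex.zero_le_real.mpr (by linarith [hεa i])
  have h1 : (((ε : ℝ) : ℂ) • (1 : Matrix (Fin d) (Fin d) ℂ)).PosDef :=
    PosDef.one.smul (by exact_mod_cast hε)
  have := PosDef.posSemidef_add (hpos _ hpsd) h1
  simpa [map_add, hunital] using this

lemma trace_mul_spectral (A U : Matrix (Fin d) (Fin d) ℂ) (f : Fin d → ℝ) :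
    ((A * (U * diagonal (fun i => (f i : ℂ)) * Uᴴ)).trace).re
      = ∑ i, ((Uᴴ * A * U) i i).re * f i := by
  rw [← mul_assoc, trace_mul_comm, ← mul_assoc, ← mul_assoc]
  simp [Matrix.trace, mul_diagonal]

lemma sum_re_diag_conj {U : Matrix (Fin d) (Fin d) ℂ} (hU : U * Uᴴ = 1)
    (A : Matrix (Fin d) (Fin d) ℂ) : ∑ i, ((Uᴴ * A * U) i i).re = A.trace.re := by
  have : (Uᴴ * A * U).trace = A.trace := by
    rw [trace_mul_comm, ← mul_assoc, hU, one_mul]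
  rw [← this]
  simp [Matrix.trace]

lemma re_diag_conj_spectral {A U : Matrix (Fin d) (Fin d) ℂ} {p : Fin d → ℝ}
    (hA : A = U * diagonal (fun i => (p i : ℂ)) * Uᴴ) (V : Matrix (Fin d) (Fin d) ℂ) (j : Fin d) :
    ((Vᴴ * A * V) j j).re = ∑ i, p i * Complex.normSq ((Vᴴ * U) j i) := by
  have : Vᴴ * A * V = (Vᴴ * U) * diagonal (fun i => (p i : ℂ)) * (Vᴴ * U)ᴴ := by
    rw [hA]; simp only [mul_assoc, conjTranspose_mul, conjTranspose_conjTranspose]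
  rw [this, Matrix.mul_apply, Complex.re_sum]
  refine Finset.sum_congr rfl fun i _ => ?_
  rw [mul_diagonal, conjTranspose_apply]
  simp [Complex.normSq_apply]
  ring

lemma sum_mul_normSq_eq_trace {A U V : Matrix (Fin d) (Fin d) ℂ} {p : Fin d → ℝ}
    (hV : V * Vᴴ = 1) (hA : A = U * diagonal (fun i => (p i : ℂ)) * Uᴴ) :
    ∑ x : Fin d × Fin d, p x.2 * Complex.normSq ((Vᴴ * U) x.1 x.2) = A.trace.re := by
  rw [← sum_re_diag_conj hV, Fintype.sum_prod_type]
  exact Finset.sum_congr rfl fun j _ => (re_diag_conj_spectral hA V j).symm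

lemma trace_conjTranspose_mul (A B : Matrix (Fin d) (Fin d) ℂ) :
    (Aᴴ * B).trace = ∑ j, ∑ i, star (A j i) * B j i := by
  rw [Finset.sum_comm]
  simp [Matrix.trace, Matrix.mul_apply]

/-- The quadratic functional whose supremum over `X` is `⟨ρ, (L_σ + t R_ρ)⁻¹ ρ⟩`. -/
def resolventForm (ρ σ : Matrix (Fin d) (Fin d) ℂ) (t : ℝ) (X : Matrix (Fin d) (Fin d) ℂ) : ℝ :=
  2 * ((Xᴴ * ρ).trace).re - ((X * Xᴴ * σ).trace).re - t * ((Xᴴ * X * ρ).trace).re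

lemma resolventForm_spectral {U V : Matrix (Fin d) (Fin d) ℂ} (hU : Uᴴ * U = 1) (hV : Vᴴ * V = 1)
    (p q : Fin d → ℝ) (t : ℝ) (Z : Matrix (Fin d) (Fin d) ℂ) :
    resolventForm (U * diagonal (fun i => (p i : ℂ)) * Uᴴ) (V * diagonal (fun i => (q i : ℂ)) * Vᴴ)
      t (V * Z * Uᴴ) = ∑ j, ∑ i, (2 * p i * (star (Z j i) * (Vᴴ * U) j i).re
        - (q j + t * p i) * Complex.normSq (Z j i)) := by
  set P := diagonal (fun i => (p i : ℂ))
  set Q := diagonal (fun i => (q i : ℂ))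
  have h1 : ((V * Z * Uᴴ)ᴴ * (U * P * Uᴴ)).trace = (Zᴴ * ((Vᴴ * U) * P)).trace := by
    rw [← mul_assoc, trace_mul_comm]
    congr 1
    simp only [conjTranspose_mul, conjTranspose_conjTranspose]
    calc _ = (Uᴴ * U) * Zᴴ * Vᴴ * U * P := by simp only [mul_assoc]
      _ = _ := by rw [hU]; simp only [one_mul, mul_assoc]
  have h2 : ((V * Z * Uᴴ) * (V * Z * Uᴴ)ᴴ * (V * Q * Vᴴ)).trace = (Zᴴ * (Q * Z)).trace := by
    rw [← mul_assoc Zᴴ, trace_mul_comm _ Z, ← mul_assoc, trace_mul_comm]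
    congr 1
    simp only [conjTranspose_mul, conjTranspose_conjTranspose]
    calc _ = (Vᴴ * V) * Z * (Uᴴ * U) * Zᴴ * (Vᴴ * V) * Q := by simp only [mul_assoc]
      _ = _ := by rw [hU, hV]; simp only [one_mul, mul_one, mul_assoc]
  have h3 : ((V * Z * Uᴴ)ᴴ * (V * Z * Uᴴ) * (U * P * Uᴴ)).trace = (Zᴴ * (Z * P)).trace := by
    rw [← mul_assoc, trace_mul_comm]
    congr 1
    simp only [conjTranspose_mul, conjTranspose_conjTranspose]
    calc _ = (Uᴴ * U) * Zᴴ * (Vᴴ * V) * Z * (Uᴴ * U) * P := by simp only [mul_assoc]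
      _ = _ := by rw [hU, hV]; simp only [one_mul, mul_one, mul_assoc]
  rw [resolventForm, h1, h2, h3]
  simp only [trace_conjTranspose_mul, Complex.re_sum, Finset.mul_sum, ← Finset.sum_sub_distrib]
  refine Finset.sum_congr rfl fun j _ => Finset.sum_congr rfl fun i _ => ?_
  simp only [P, Q, mul_diagonal, diagonal_mul, Complex.star_def, Complex.mul_re, Complex.mul_im,
    Complex.conj_re, Complex.conj_im, Complex.ofReal_re, Complex.ofReal_im, Complex.normSq_apply]
  ring

lemma resolventForm_le {U V : Matrix (Fin d) (Fin d) ℂ} (hU : Uᴴ * U = 1) (hU' : U * Uᴴ = 1)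
    (hV : Vᴴ * V = 1) (hV' : V * Vᴴ = 1) {p q : Fin d → ℝ} (hp : ∀ i, 0 < p i) (hq : ∀ j, 0 < q j)
    {t : ℝ} (ht : 0 ≤ t) (X : Matrix (Fin d) (Fin d) ℂ) :
    resolventForm (U * diagonal (fun i => (p i : ℂ)) * Uᴴ) (V * diagonal (fun i => (q i : ℂ)) * Vᴴ)
      t X ≤ ∑ j, ∑ i, p i * Complex.normSq ((Vᴴ * U) j i) / (q j / p i + t) := by
  have hX : X = V * (Vᴴ * X * U) * Uᴴ := by
    calc X = (V * Vᴴ) * X * (U * Uᴴ) := by rw [hU', hV', one_mul, mul_one]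
      _ = _ := by simp only [mul_assoc]
  rw [hX, resolventForm_spectral hU hV]
  refine Finset.sum_le_sum fun j _ => Finset.sum_le_sum fun i _ => ?_
  generalize (Vᴴ * X * U) j i = z
  generalize (Vᴴ * U) j i = m
  have hpi := hp i
  have hqj := hq j
  have hs : 0 < q j + t * p i := by positivity
  have e : p i * Complex.normSq m / (q j / p i + t)
      = p i ^ 2 * Complex.normSq m / (q j + t * p i) := by
    field_simp
  rw [e, le_div_iff₀ hs]
  simp only [Complex.star_def, Complex.mul_re, Complex.conj_re, Complex.conj_im,
    Complex.normSq_apply]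
  nlinarith [sq_nonneg ((q j + t * p i) * z.re - p i * m.re),
    sq_nonneg ((q j + t * p i) * z.im - p i * m.im)]

lemma exists_resolventForm_eq {U V : Matrix (Fin d) (Fin d) ℂ} (hU : Uᴴ * U = 1)
    (hV : Vᴴ * V = 1) {p q : Fin d → ℝ} (hp : ∀ i, 0 < p i) (hq : ∀ j, 0 < q j)
    {t : ℝ} (ht : 0 ≤ t) : ∃ X : Matrix (Fin d) (Fin d) ℂ,
    resolventForm (U * diagonal (fun i => (p i : ℂ)) * Uᴴ) (V * diagonal (fun i => (q i : ℂ)) * Vᴴ)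
      t X = ∑ j, ∑ i, p i * Complex.normSq ((Vᴴ * U) j i) / (q j / p i + t) := by
  refine ⟨V * (Matrix.of fun j i => ((p i / (q j + t * p i) : ℝ) : ℂ) * (Vᴴ * U) j i) * Uᴴ, ?_⟩
  rw [resolventForm_spectral hU hV]
  refine Finset.sum_congr rfl fun j _ => Finset.sum_congr rfl fun i _ => ?_
  rw [Matrix.of_apply]
  generalize (Vᴴ * U) j i = m
  have hpi := hp i
  have hqj := hq j
  have hs : 0 < q j + t * p i := by positivity
  have e : p i * Complex.normSq m / (q j / p i + t)
      = p i ^ 2 * Complex.normSq m / (q j + t * p i) := by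
    field_simp
  rw [e]
  simp only [Complex.star_def, Complex.mul_re, Complex.mul_im, Complex.conj_re, Complex.conj_im,
    Complex.normSq_apply, Complex.ofReal_re, Complex.ofReal_im]
  field_simp
  ring

lemma relEnt_spectral {ρ σ U V : Matrix (Fin d) (Fin d) ℂ} (hU : Uᴴ * U = 1)
    (hV' : V * Vᴴ = 1) {p q : Fin d → ℝ} (hp : ∀ i, 0 < p i) (hq : ∀ j, 0 < q j)
    (hρ : ρ = U * diagonal (fun i => (p i : ℂ)) * Uᴴ)
    (hlρ : mlog ρ = U * diagonal (fun i => (Real.log (p i) : ℂ)) * Uᴴ)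
    (hlσ : mlog σ = V * diagonal (fun i => (Real.log (q i) : ℂ)) * Vᴴ) :
    relEnt ρ σ = -∑ x : Fin d × Fin d,
      (p x.2 * Complex.normSq ((Vᴴ * U) x.1 x.2)) * Real.log (q x.1 / p x.2) := by
  have h1 : Uᴴ * ρ * U = diagonal (fun i => (p i : ℂ)) := by
    calc Uᴴ * ρ * U = (Uᴴ * U) * diagonal (fun i => (p i : ℂ)) * (Uᴴ * U) := by
          rw [hρ]; simp only [mul_assoc]
      _ = _ := by rw [hU, one_mul, mul_one]
  have h3 : ∀ i, ∑ j, Complex.normSq ((Vᴴ * U) j i) = 1 := by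
    intro i
    have : (Vᴴ * U)ᴴ * (Vᴴ * U) = 1 := by
      calc _ = Uᴴ * (V * Vᴴ) * U := by
            simp only [mul_assoc, conjTranspose_mul, conjTranspose_conjTranspose]
        _ = 1 := by rw [hV', mul_one, hU]
    have := congrArg Complex.re (congrFun (congrFun this i) i)
    rw [Matrix.mul_apply, Complex.re_sum] at this
    simpa [Complex.normSq_apply] using this
  rw [relEnt, trace_sub, Complex.sub_re, hlρ, hlσ, trace_mul_spectral, trace_mul_spectral, h1]
  simp only [re_diag_conj_spectral hρ V, Fintype.sum_prod_type]
  have h4 : ∑ i, ((diagonal (fun i => (p i : ℂ)) : Matrix (Fin d) (Fin d) ℂ) i i).re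
      * Real.log (p i)
      = ∑ j, ∑ i, p i * Complex.normSq ((Vᴴ * U) j i) * Real.log (p i) := by
    rw [Finset.sum_comm]
    refine Finset.sum_congr rfl fun i _ => ?_
    rw [← Finset.sum_mul, ← Finset.mul_sum, h3]
    simp
  rw [h4, ← Finset.sum_sub_distrib, ← Finset.sum_neg_distrib]
  refine Finset.sum_congr rfl fun j _ => ?_
  rw [Finset.sum_mul, ← Finset.sum_sub_distrib, ← Finset.sum_neg_distrib]
  refine Finset.sum_congr rfl fun i _ => ?_
  rw [Real.log_div (hq j).ne' (hp i).ne']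
  ring

section TraceAdjoint

variable {Φ Φad : Matrix (Fin d) (Fin d) ℂ →ₗ[ℂ] Matrix (Fin d) (Fin d) ℂ}

lemma traceAdjoint_map_one (htp : ∀ x, (Φ x).trace = x.trace)
    (hadj : ∀ a b : Matrix (Fin d) (Fin d) ℂ, (Φad a * b).trace = (a * Φ b).trace) :
    Φad 1 = 1 := by
  rw [ext_iff_trace_mul_right]
  intro x
  rw [hadj, one_mul, one_mul, htp]

lemma traceAdjoint_map_conjTranspose (hCP : IsCompletelyPositive Φ)
    (hadj : ∀ a b : Matrix (Fin d) (Fin d) ℂ, (Φad a * b).trace = (a * Φ b).trace)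
    (X : Matrix (Fin d) (Fin d) ℂ) : Φad Xᴴ = (Φad X)ᴴ := by
  rw [ext_iff_trace_mul_right]
  intro x
  have h := congrArg star (hadj X xᴴ)
  rw [← trace_conjTranspose, ← trace_conjTranspose, conjTranspose_mul, conjTranspose_mul,
    hCP.map_conjTranspose, conjTranspose_conjTranspose, conjTranspose_conjTranspose] at h
  rw [hadj, trace_mul_comm, ← h, trace_mul_comm]

open scoped MatrixOrder in
lemma traceAdjoint_posSemidef (hCP : IsCompletelyPositive Φ)
    (hadj : ∀ a b : Matrix (Fin d) (Fin d) ℂ, (Φad a * b).trace = (a * Φ b).trace)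
    {A : Matrix (Fin d) (Fin d) ℂ} (hA : A.PosSemidef) : (Φad A).PosSemidef := by
  refine PosSemidef.of_dotProduct_mulVec_nonneg ?_ fun x => ?_
  · rw [IsHermitian, ← traceAdjoint_map_conjTranspose hCP hadj, hA.isHermitian.eq]
  · have h1 : star x ⬝ᵥ (Φad A *ᵥ x) = (Φad A * vecMulVec x (star x)).trace := by
      rw [mul_vecMulVec, trace_vecMulVec, dotProduct_comm]
    obtain ⟨B, rfl⟩ := CStarAlgebra.nonneg_iff_eq_star_mul_self.mp hA.nonneg
    have h2 := ((hCP.posSemidef_map (posSemidef_vecMulVec_self_star x)).mul_mul_conjTranspose_same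
      B).trace_nonneg
    rw [h1, hadj, mul_assoc, trace_mul_comm]
    exact h2

lemma trace_traceAdjoint_blocks_nonneg (hCP : IsCompletelyPositive Φ)
    (hadj : ∀ a b : Matrix (Fin d) (Fin d) ℂ, (Φad a * b).trace = (a * Φ b).trace)
    {ρ : Matrix (Fin d) (Fin d) ℂ} (hρ : ρ.PosSemidef) (G H X : Matrix (Fin d) (Fin d) ℂ) :
    0 ≤ ((Φad (Gᴴ * G) + Φad (Gᴴ * H) * X + Xᴴ * Φad (Hᴴ * G) + Xᴴ * Φad (Hᴴ * H) * X)
      * ρ).trace := by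
  have h := hCP.sum_trace_nonneg hρ ![1, Xᴴ] ![G, H]
  have key : ∀ A B Y : Matrix (Fin d) (Fin d) ℂ,
      (A * Φ Y * Bᴴ).trace = (Φad (Bᴴ * A) * Y).trace := by
    intro A B Y
    rw [hadj, trace_mul_comm, mul_assoc]
  simp only [Fin.sum_univ_two, key, Matrix.cons_val_zero, Matrix.cons_val_one,
    conjTranspose_one, one_mul, mul_one, conjTranspose_conjTranspose] at h
  refine h.trans_eq ?_
  have e1 : (Xᴴ * Φad (Hᴴ * G) * ρ).trace = (Φad (Hᴴ * G) * (ρ * Xᴴ)).trace := by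
    rw [mul_assoc, trace_mul_comm, mul_assoc]
  have e2 : (Xᴴ * Φad (Hᴴ * H) * X * ρ).trace = (Φad (Hᴴ * H) * (X * ρ * Xᴴ)).trace := by
    rw [mul_assoc, mul_assoc, trace_mul_comm]
    simp only [mul_assoc]
  simp only [add_mul, trace_add, e1, e2, mul_assoc (Φad _) X ρ]
  ring

lemma trace_schwarz_le (hCP : IsCompletelyPositive Φ) (htp : ∀ x, (Φ x).trace = x.trace)
    (hadj : ∀ a b : Matrix (Fin d) (Fin d) ℂ, (Φad a * b).trace = (a * Φ b).trace)
    {ρ : Matrix (Fin d) (Fin d) ℂ} (hρ : ρ.PosSemidef) (Y : Matrix (Fin d) (Fin d) ℂ) :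
    (((Φad Y)ᴴ * Φad Y * ρ).trace).re ≤ ((Yᴴ * Y * Φ ρ).trace).re := by
  have h := trace_traceAdjoint_blocks_nonneg hCP hadj hρ Y 1 (-Φad Y)
  simp only [conjTranspose_one, one_mul, mul_one, traceAdjoint_map_one htp hadj,
    traceAdjoint_map_conjTranspose hCP hadj, conjTranspose_neg, mul_neg, neg_mul, neg_neg,
    neg_add_cancel_right, add_mul, trace_add, trace_neg, hadj] at h
  have := (Complex.le_def.mp h).1
  simp at this
  linarith

lemma trace_inv_map_le (hCP : IsCompletelyPositive Φ)
    (htp : ∀ x, (Φ x).trace = x.trace)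
    (hadj : ∀ a b : Matrix (Fin d) (Fin d) ℂ, (Φad a * b).trace = (a * Φ b).trace)
    {ρ : Matrix (Fin d) (Fin d) ℂ} (hρ : ρ.PosSemidef) {G H R : Matrix (Fin d) (Fin d) ℂ}
    (hGH : Gᴴ * H = 1) (hR : R.IsHermitian) (hRH : R * Φad (Hᴴ * H) = 1) :
    ((ρ * R).trace).re ≤ ((Φ ρ * (Gᴴ * G)).trace).re := by
  have hHG : Hᴴ * G = 1 := by
    simpa using congrArg conjTranspose hGH
  have h := trace_traceAdjoint_blocks_nonneg hCP hadj hρ G H (-R)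
  simp only [hGH, hHG, traceAdjoint_map_one htp hadj, conjTranspose_neg, hR.eq, neg_mul, hRH,
    one_mul, mul_one, mul_neg, neg_neg, neg_add_cancel_right, add_mul, trace_add, trace_neg,
    hadj] at h
  have := (Complex.le_def.mp h).1
  rw [trace_mul_comm ρ, trace_mul_comm (Φ ρ)]
  simp at this
  linarith

lemma resolventForm_map_le (hCP : IsCompletelyPositive Φ) (htp : ∀ x, (Φ x).trace = x.trace)
    (hadj : ∀ a b : Matrix (Fin d) (Fin d) ℂ, (Φad a * b).trace = (a * Φ b).trace)
    {ρ σ : Matrix (Fin d) (Fin d) ℂ} (hρ : ρ.PosSemidef) (hσ : σ.PosSemidef) {t : ℝ} (ht : 0 ≤ t)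
    (Y : Matrix (Fin d) (Fin d) ℂ) :
    resolventForm (Φ ρ) (Φ σ) t Y ≤ resolventForm ρ σ t (Φad Y) := by
  have h1 := trace_schwarz_le hCP htp hadj hρ Y
  have h2 := trace_schwarz_le hCP htp hadj hσ Yᴴ
  rw [traceAdjoint_map_conjTranspose hCP hadj, conjTranspose_conjTranspose,
    conjTranspose_conjTranspose] at h2
  have h3 := mul_le_mul_of_nonneg_left h1 ht
  rw [resolventForm, resolventForm, ← traceAdjoint_map_conjTranspose hCP hadj, hadj,
    traceAdjoint_map_conjTranspose hCP hadj]
  linarith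

/-- Monotonicity of the relative entropy under a channel. -/
lemma relEnt_map_le (hCP : IsCompletelyPositive Φ) (htp : ∀ x, (Φ x).trace = x.trace)
    (hadj : ∀ a b : Matrix (Fin d) (Fin d) ℂ, (Φad a * b).trace = (a * Φ b).trace)
    {ρ σ : Matrix (Fin d) (Fin d) ℂ} (hρ : ρ.PosDef) (hσ : σ.PosDef)
    (hΦρ : (Φ ρ).PosDef) (hΦσ : (Φ σ).PosDef) :
    relEnt (Φ ρ) (Φ σ) ≤ relEnt ρ σ := by
  obtain ⟨U, p, hU, hU', hp, hρU, hlρ⟩ := hρ.exists_spectral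
  obtain ⟨V, q, hV, hV', hq, hσV, hlσ⟩ := hσ.exists_spectral
  obtain ⟨U₁, p₁, hU₁, hU₁', hp₁, hρU₁, hlρ₁⟩ := hΦρ.exists_spectral
  obtain ⟨V₁, q₁, hV₁, hV₁', hq₁, hσV₁, hlσ₁⟩ := hΦσ.exists_spectral
  rw [relEnt_spectral hU hV' hp hq hρU hlρ hlσ, relEnt_spectral hU₁ hV₁' hp₁ hq₁ hρU₁ hlρ₁ hlσ₁]
  refine neg_le_neg (sum_mul_log_le_sum_mul_log (fun x => div_pos (hq₁ _) (hp₁ _))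
    (fun x => div_pos (hq _) (hp _)) ?_ fun t ht => ?_)
  · rw [sum_mul_normSq_eq_trace hV₁' hρU₁, sum_mul_normSq_eq_trace hV' hρU, htp]
  · obtain ⟨Y, hY⟩ := exists_resolventForm_eq hU₁ hV₁ hp₁ hq₁ ht
    rw [Fintype.sum_prod_type, Fintype.sum_prod_type, ← hY, ← hρU₁, ← hσV₁]
    refine (resolventForm_map_le hCP htp hadj hρ.posSemidef hσ.posSemidef ht Y).trans ?_
    conv_lhs => rw [hρU, hσV]
    exact resolventForm_le hU hU' hV hV' hp hq ht _

/-- Operator Jensen inequality for the logarithm, in trace form. -/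
lemma trace_map_mul_mlog_le (hCP : IsCompletelyPositive Φ) (htp : ∀ x, (Φ x).trace = x.trace)
    (hadj : ∀ a b : Matrix (Fin d) (Fin d) ℂ, (Φad a * b).trace = (a * Φ b).trace)
    {ρ τ : Matrix (Fin d) (Fin d) ℂ} (hρ : ρ.PosSemidef) (hτ : τ.PosDef)
    (hΦτ : (Φad τ).PosDef) :
    ((Φ ρ * mlog τ).trace).re ≤ ((ρ * mlog (Φad τ)).trace).re := by
  obtain ⟨V, b, hV, hV', hb, hτV, hlτ⟩ := hτ.exists_spectral
  obtain ⟨U, a, hU, hU', ha, hτU, hlU⟩ := hΦτ.exists_spectral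
  rw [hlτ, hlU, trace_mul_spectral, trace_mul_spectral]
  refine sum_mul_log_le_sum_mul_log ha hb ?_ fun t ht => ?_
  · rw [sum_re_diag_conj hU', sum_re_diag_conj hV', htp]
  · simp only [div_eq_mul_inv]
    rw [← trace_mul_spectral, ← trace_mul_spectral]
    have hbt : ∀ i, 0 < b i + t := fun i => add_pos_of_pos_of_nonneg (hb i) ht
    have hat : ∀ i, 0 < a i + t := fun i => add_pos_of_pos_of_nonneg (ha i) ht
    have hmul : ∀ f g : Fin d → ℝ, (diagonal (fun i => (f i : ℂ)) * Vᴴ)ᴴ *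
        (diagonal (fun i => (g i : ℂ)) * Vᴴ)
        = V * diagonal (fun i => ((f i * g i : ℝ) : ℂ)) * Vᴴ := by
      intro f g
      have : (diagonal (fun i => (f i : ℂ)))ᴴ = diagonal (fun i => (f i : ℂ)) := by
        simp [diagonal_conjTranspose, Pi.star_def]
      rw [conjTranspose_mul, conjTranspose_conjTranspose, this, mul_assoc, ← mul_assoc _ _ Vᴴ,
        diagonal_mul_diagonal, ← mul_assoc]
      simp
    have hGG := hmul (fun i => (√(b i + t))⁻¹) (fun i => (√(b i + t))⁻¹)
    have hGH := hmul (fun i => (√(b i + t))⁻¹) (fun i => √(b i + t))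
    have hHH := hmul (fun i => √(b i + t)) (fun i => √(b i + t))
    simp only [← mul_inv, Real.mul_self_sqrt (hbt _).le,
      inv_mul_cancel₀ (Real.sqrt_pos.mpr (hbt _)).ne'] at hGG hGH hHH
    rw [← hGG]
    refine trace_inv_map_le hCP htp hadj hρ
      (H := diagonal (fun i => (√(b i + t) : ℂ)) * Vᴴ) ?_ ?_ ?_
    · rw [hGH]
      simp [hV']
    · refine isHermitian_mul_mul_conjTranspose U ?_
      simp [IsHermitian, diagonal_conjTranspose, Pi.star_def]
    · rw [hHH, ← spectral_add_smul_one hV', ← hτV, map_add, map_smul,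
        traceAdjoint_map_one htp hadj, hτU, spectral_add_smul_one hU']
      calc _ = U * diagonal (fun i => (((a i + t)⁻¹ : ℝ) : ℂ)) * (Uᴴ * U) *
            diagonal (fun i => ((a i + t : ℝ) : ℂ)) * Uᴴ := by simp only [mul_assoc]
        _ = U * diagonal (fun i => (((a i + t)⁻¹ * (a i + t) : ℝ) : ℂ)) * Uᴴ := by
            rw [hU, mul_one, mul_assoc U, diagonal_mul_diagonal]
            simp
        _ = 1 := by
            simp only [inv_mul_cancel₀ (hat _).ne']
            simp [hU']

end TraceAdjoint

/-- the entropy difference lemma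
`D(ρ ‖ Φ*Φ(ω)) ≤ (H(ρ) − H(Φ(ρ))) + D(ρ ‖ ω)` for a unital quantum channel `Φ` with
trace adjoint `Φ*`. -/
theorem entropy_difference_lemma
    (Φ Φad : Matrix (Fin d) (Fin d) ℂ →ₗ[ℂ] Matrix (Fin d) (Fin d) ℂ)
    (hCP : IsCompletelyPositive Φ) (hunital : Φ 1 = 1)
    (htp : ∀ x, (Φ x).trace = x.trace)
    (hadj : ∀ a b : Matrix (Fin d) (Fin d) ℂ, (Φad a * b).trace = (a * Φ b).trace)
    (ρ ω : Matrix (Fin d) (Fin d) ℂ)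
    (hρ : ρ.PosDef) (hω : ω.PosDef) (hρ1 : ρ.trace = 1) (hω1 : ω.trace = 1) :
    relEnt ρ (Φad (Φ ω)) ≤ (vnEnt ρ - vnEnt (Φ ρ)) + relEnt ρ ω := by
  have hΦρ : (Φ ρ).PosDef :=
    posDef_map_of_posSemidef_map (fun _ => hCP.posSemidef_map) hunital hρ
  have hΦω : (Φ ω).PosDef :=
    posDef_map_of_posSemidef_map (fun _ => hCP.posSemidef_map) hunital hω
  have hΦΦω : (Φad (Φ ω)).PosDef :=
    posDef_map_of_posSemidef_map (fun _ => traceAdjoint_posSemidef hCP hadj)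
      (traceAdjoint_map_one htp hadj) hΦω
  have hmono := relEnt_map_le hCP htp hadj hρ hω hΦρ hΦω
  have hjensen := trace_map_mul_mlog_le hCP htp hadj hρ.posSemidef hΦω hΦΦω
  simp only [relEnt, vnEnt, trace_sub, Complex.sub_re] at hmono ⊢
  linarith
end
end

section
/- Let ρ, σ be positive definite d×d density matrices and set ρ_t = t·ρ + (1−t)·σ for t ∈ [0,1]. Then the quantum relative entropy satisfies the integral representation D(ρ‖σ) = ∫₀¹ (1−t)·γ_{ρ_t}(ρ−σ) dt, where γ is the BKM metric γ_ω(X) = ∫₀^∞ tr(X*(ω+s)^{-1} X (ω+s)^{-1}) ds. -/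
open Matrix MeasureTheory
open scoped ComplexOrder

noncomputable section

variable {d : ℕ}

/-- The Bogoliubov–Kubo–Mori metric
`γ_ω(X) = ∫₀^∞ tr(X*(ω+s)⁻¹ X (ω+s)⁻¹) ds`. -/
def bkm (ω X : Matrix (Fin d) (Fin d) ℂ) : ℝ :=
  ∫ s in Set.Ioi (0 : ℝ),
    ((Xᴴ * (ω + (s : ℂ) • (1 : Matrix (Fin d) (Fin d) ℂ))⁻¹ * X *
      (ω + (s : ℂ) • (1 : Matrix (Fin d) (Fin d) ℂ))⁻¹).trace).re

open Filter Topology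

namespace Matrix

variable {n : Type*} [Fintype n] [DecidableEq n]

/-- A Hermitian matrix as an explicit product of its spectral data. -/
lemma IsHermitian.eq_conj_diagonal {A : Matrix n n ℂ} (hA : A.IsHermitian) :
    A = (hA.eigenvectorUnitary : Matrix n n ℂ) *
      diagonal (fun i => (hA.eigenvalues i : ℂ)) *
      star (hA.eigenvectorUnitary : Matrix n n ℂ) := by
  conv_lhs => rw [hA.spectral_theorem]
  rfl

/-- The trace of `M` against `U * diagonal v * U⋆`, for real `v`. -/
lemma re_trace_mul_conj_diagonal (M U : Matrix n n ℂ) (v : n → ℝ) :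
    (M * (U * diagonal (fun i => (v i : ℂ)) * star U)).trace.re =
      ∑ i, ((star U * M * U) i i).re * v i := by
  have h : (M * (U * diagonal (fun i => (v i : ℂ)) * star U)).trace =
      ((star U * M * U) * diagonal (fun i => (v i : ℂ))).trace := by
    rw [← mul_assoc, trace_mul_comm]
    simp only [mul_assoc]
  rw [h, trace, Complex.re_sum]
  simp [mul_diagonal]

lemma PosSemidef.re_trace_mul_nonneg {M R : Matrix n n ℂ} (hM : M.PosSemidef)
    (hR : R.PosSemidef) : 0 ≤ (M * R).trace.re := by
  rw [hR.isHermitian.eq_conj_diagonal, re_trace_mul_conj_diagonal]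
  refine Finset.sum_nonneg fun i _ => mul_nonneg ?_ (hR.eigenvalues_nonneg i)
  exact (Complex.le_def.1 (hM.conjTranspose_mul_mul_same _).diag_nonneg).1

lemma IsHermitian.add_smul_one_eq {A : Matrix n n ℂ} (hA : A.IsHermitian) (s : ℝ) :
    A + (s : ℂ) • (1 : Matrix n n ℂ) = (hA.eigenvectorUnitary : Matrix n n ℂ) *
      diagonal (fun i => ((hA.eigenvalues i + s : ℝ) : ℂ)) *
      star (hA.eigenvectorUnitary : Matrix n n ℂ) := by
  have hU : (hA.eigenvectorUnitary : Matrix n n ℂ) *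
      star (hA.eigenvectorUnitary : Matrix n n ℂ) = 1 := Unitary.coe_mul_star_self _
  have hd : diagonal (fun i => ((hA.eigenvalues i + s : ℝ) : ℂ)) =
      diagonal (fun i => (hA.eigenvalues i : ℂ)) + (s : ℂ) • (1 : Matrix n n ℂ) := by
    rw [smul_one_eq_diagonal, diagonal_add]
    simp
  rw [hd, mul_add, add_mul, ← hA.eq_conj_diagonal]
  simp [hU]

lemma IsHermitian.inv_add_smul_one {A : Matrix n n ℂ} (hA : A.IsHermitian) {s : ℝ}
    (hs : ∀ i, hA.eigenvalues i + s ≠ 0) :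
    (A + (s : ℂ) • (1 : Matrix n n ℂ))⁻¹ = (hA.eigenvectorUnitary : Matrix n n ℂ) *
      diagonal (fun i => (((hA.eigenvalues i + s)⁻¹ : ℝ) : ℂ)) *
      star (hA.eigenvectorUnitary : Matrix n n ℂ) := by
  have hU : (hA.eigenvectorUnitary : Matrix n n ℂ) *
      star (hA.eigenvectorUnitary : Matrix n n ℂ) = 1 := Unitary.coe_mul_star_self _
  have hU' : star (hA.eigenvectorUnitary : Matrix n n ℂ) *
      (hA.eigenvectorUnitary : Matrix n n ℂ) = 1 := Unitary.coe_star_mul_self _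
  refine inv_eq_right_inv ?_
  rw [hA.add_smul_one_eq]
  set U := (hA.eigenvectorUnitary : Matrix n n ℂ)
  set D := diagonal (fun i => ((hA.eigenvalues i + s : ℝ) : ℂ))
  set E := diagonal (fun i => (((hA.eigenvalues i + s)⁻¹ : ℝ) : ℂ))
  have hDE : D * E = 1 := by
    rw [diagonal_mul_diagonal, ← diagonal_one]
    congr 1
    funext i
    rw [← Complex.ofReal_mul, mul_inv_cancel₀ (hs i), Complex.ofReal_one]
  calc U * D * star U * (U * E * star U) = U * (D * ((star U * U) * E)) * star U := by
        simp only [mul_assoc]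
    _ = 1 := by rw [hU', one_mul, hDE, mul_one, hU]

lemma IsHermitian.re_det_add_smul_one {A : Matrix n n ℂ} (hA : A.IsHermitian) (s : ℝ) :
    (A + (s : ℂ) • (1 : Matrix n n ℂ)).det.re = ∏ i, (hA.eigenvalues i + s) := by
  have hU : (hA.eigenvectorUnitary : Matrix n n ℂ) *
      star (hA.eigenvectorUnitary : Matrix n n ℂ) = 1 := Unitary.coe_mul_star_self _
  rw [hA.add_smul_one_eq, det_mul_right_comm, hU, one_mul, det_diagonal, ← Complex.ofReal_prod,
    Complex.ofReal_re]

lemma IsHermitian.sum_eigenvalues_eq_re_trace {A : Matrix n n ℂ} (hA : A.IsHermitian) :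
    ∑ i, hA.eigenvalues i = A.trace.re := by
  rw [hA.trace_eq_sum_eigenvalues, Complex.re_sum]
  rfl

lemma sum_re_conj_apply (M : Matrix n n ℂ) {U : Matrix n n ℂ} (hU : U * star U = 1) :
    ∑ i, ((star U * M * U) i i).re = M.trace.re := by
  have h := re_trace_mul_conj_diagonal M U 1
  simp only [Pi.one_apply, Complex.ofReal_one, diagonal_one, mul_one, hU] at h
  exact h.symm

lemma continuousAt_inv_of_det_ne_zero {A : Matrix n n ℂ} (hA : A.det ≠ 0) :
    ContinuousAt (fun B : Matrix n n ℂ => B⁻¹) A := by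
  refine continuousAt_matrix_inv _ ?_
  rw [Ring.inverse_eq_inv']
  exact continuousAt_inv₀ hA

/-- Derivative of the trace of the resolvent along a line. -/
lemma hasDerivAt_re_trace_mul_inv (A X : Matrix n n ℂ) {t : ℝ}
    (h : (A + (t : ℂ) • X).det ≠ 0) :
    HasDerivAt (fun u : ℝ => (X * (A + (u : ℂ) • X)⁻¹).trace.re)
      (-(X * (A + (t : ℂ) • X)⁻¹ * X * (A + (t : ℂ) • X)⁻¹).trace.re) t := by
  have hline : Continuous fun u : ℝ => A + (u : ℂ) • X := by fun_prop
  have hinv : ContinuousAt (fun u : ℝ => (A + (u : ℂ) • X)⁻¹) t :=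
    ContinuousAt.comp (g := fun B : Matrix n n ℂ => B⁻¹)
      (continuousAt_inv_of_det_ne_zero h) hline.continuousAt
  have hne : ∀ᶠ u : ℝ in 𝓝 t, (A + (u : ℂ) • X).det ≠ 0 :=
    hline.matrix_det.continuousAt.eventually_ne h
  rw [hasDerivAt_iff_tendsto_slope]
  have hlim : Tendsto
      (fun u : ℝ => -(X * (A + (u : ℂ) • X)⁻¹ * X * (A + (t : ℂ) • X)⁻¹).trace.re) (𝓝 t)
      (𝓝 (-(X * (A + (t : ℂ) • X)⁻¹ * X * (A + (t : ℂ) • X)⁻¹).trace.re)) := by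
    have hc : ∀ C : Matrix n n ℂ, Continuous fun B : Matrix n n ℂ =>
        -(X * B * X * C).trace.re := fun C =>
      (Complex.continuous_re.comp (((continuous_const.matrix_mul continuous_id).matrix_mul
        continuous_const).matrix_mul continuous_const).matrix_trace).neg
    exact (hc _).continuousAt.comp_of_eq hinv rfl
  refine (hlim.mono_left nhdsWithin_le_nhds).congr' ?_
  filter_upwards [hne.filter_mono nhdsWithin_le_nhds, self_mem_nhdsWithin] with u hu hut
  have hut' : u - t ≠ 0 := sub_ne_zero.2 hut
  set P := A + (u : ℂ) • X with hP
  set Q := A + (t : ℂ) • X with hQ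
  have hdiff : P⁻¹ - Q⁻¹ = -((u - t : ℝ) : ℂ) • (P⁻¹ * X * Q⁻¹) := by
    have h1 : Q - P = -((u - t : ℝ) : ℂ) • X := by
      rw [hP, hQ, Complex.ofReal_sub]
      module
    calc P⁻¹ - Q⁻¹ = P⁻¹ * (Q * Q⁻¹) - (P⁻¹ * P) * Q⁻¹ := by
          rw [mul_nonsing_inv _ h.isUnit, nonsing_inv_mul _ hu.isUnit, mul_one, one_mul]
      _ = P⁻¹ * (Q - P) * Q⁻¹ := by noncomm_ring
      _ = _ := by rw [h1]; simp
  have htr : (X * P⁻¹).trace.re - (X * Q⁻¹).trace.re =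
      -((u - t) * (X * P⁻¹ * X * Q⁻¹).trace.re) := by
    rw [← Complex.sub_re, ← trace_sub, ← mul_sub, hdiff, mul_smul_comm, trace_smul,
      smul_eq_mul, neg_mul, Complex.neg_re, Complex.re_ofReal_mul]
    simp only [mul_assoc]
  rw [slope_def_field, htr]
  field_simp

/-- Jacobi's formula along a line. -/
lemma hasDerivAt_det_add_smul (A X : Matrix n n ℂ) {t : ℝ}
    (h : (A + (t : ℂ) • X).det ≠ 0) :
    HasDerivAt (fun u : ℝ => (A + (u : ℂ) • X).det)
      ((A + (t : ℂ) • X).det * (X * (A + (t : ℂ) • X)⁻¹).trace) t := by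
  set Q := A + (t : ℂ) • X with hQ
  have hfac : ∀ u : ℝ, (A + (u : ℂ) • X).det =
      Q.det * (1 + ((u - t : ℝ) : ℂ) • (Q⁻¹ * X)).det := fun u => by
    rw [← det_mul, mul_add, mul_one, mul_smul_comm, mul_nonsing_inv_cancel_left _ _ h.isUnit, hQ,
      Complex.ofReal_sub]
    congr 1
    module
  set p := (det (1 + (Polynomial.X : Polynomial ℂ) • (Q⁻¹ * X).map Polynomial.C)) with hp
  have hev : ∀ z : ℂ, (1 + z • (Q⁻¹ * X)).det = p.eval z := fun z => by
    rw [det_one_add_smul]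
    conv_rhs => rw [hp, det_one_add_X_smul]
    simp
  have hder : HasDerivAt (fun z : ℂ => p.eval z) ((X * Q⁻¹).trace) ((t - t : ℝ) : ℂ) := by
    have h0 : (Polynomial.derivative p).eval 0 = (X * Q⁻¹).trace := by
      rw [hp, derivative_det_one_add_X_smul, trace_mul_comm]
    rw [sub_self, Complex.ofReal_zero, ← h0]
    exact p.hasDerivAt 0
  have hlin : HasDerivAt (fun u : ℝ => ((u - t : ℝ) : ℂ)) 1 t := by
    simpa using ((hasDerivAt_id t).sub_const t).ofReal_comp
  have := (hder.comp t hlin).const_mul Q.det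
  rw [mul_one] at this
  refine this.congr_of_eventuallyEq (Eventually.of_forall fun u => ?_)
  simp only [hfac u, hev, Function.comp_apply]

lemma hasDerivAt_log_re_det (A X : Matrix n n ℂ) {t : ℝ} (h : (A + (t : ℂ) • X).PosDef) :
    HasDerivAt (fun u : ℝ => Real.log (A + (u : ℂ) • X).det.re)
      (X * (A + (t : ℂ) • X)⁻¹).trace.re t := by
  obtain ⟨hre, him⟩ := Complex.pos_iff.1 h.det_pos
  have hd := Complex.reCLM.hasFDerivAt.comp_hasDerivAt t
    (hasDerivAt_det_add_smul A X h.det_pos.ne')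
  refine (hd.log (by simpa using hre.ne')).congr_deriv ?_
  simp only [Complex.reCLM_apply, Function.comp_apply, Complex.mul_re, ← him, zero_mul, sub_zero]
  field_simp

/-- Second-order Taylor expansion with integral remainder of `-log det` along a segment. -/
lemma integral_one_sub_mul_re_trace (A X : Matrix n n ℂ)
    (h : ∀ t ∈ Set.Icc (0 : ℝ) 1, (A + (t : ℂ) • X).PosDef) :
    ∫ t in (0 : ℝ)..1,
        (1 - t) * (X * (A + (t : ℂ) • X)⁻¹ * X * (A + (t : ℂ) • X)⁻¹).trace.re =
      Real.log A.det.re - Real.log (A + X).det.re + (X * A⁻¹).trace.re := by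
  have hderiv : ∀ t ∈ Set.uIcc (0 : ℝ) 1, HasDerivAt
      (fun u : ℝ => -((1 - u) * (X * (A + (u : ℂ) • X)⁻¹).trace.re) -
        Real.log (A + (u : ℂ) • X).det.re)
      ((1 - t) * (X * (A + (t : ℂ) • X)⁻¹ * X * (A + (t : ℂ) • X)⁻¹).trace.re) t := by
    intro t ht
    rw [Set.uIcc_of_le zero_le_one] at ht
    refine ((((hasDerivAt_id t).const_sub 1).mul
      (hasDerivAt_re_trace_mul_inv A X (h t ht).det_pos.ne')).neg.sub
      (hasDerivAt_log_re_det A X (h t ht))).congr_deriv ?_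
    simp only [id]
    ring
  have hcont : ContinuousOn (fun t : ℝ =>
      (1 - t) * (X * (A + (t : ℂ) • X)⁻¹ * X * (A + (t : ℂ) • X)⁻¹).trace.re)
      (Set.uIcc (0 : ℝ) 1) := by
    intro t ht
    rw [Set.uIcc_of_le zero_le_one] at ht
    have hinv : ContinuousAt (fun u : ℝ => (A + (u : ℂ) • X)⁻¹) t :=
      ContinuousAt.comp (g := fun B : Matrix n n ℂ => B⁻¹)
        (continuousAt_inv_of_det_ne_zero (h t ht).det_pos.ne')
        (Continuous.continuousAt (by fun_prop))
    have hc : Continuous fun q : ℝ × Matrix n n ℂ => (1 - q.1) * (X * q.2 * X * q.2).trace.re := by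
      fun_prop
    exact (hc.continuousAt.comp (continuousAt_id.prodMk hinv)).continuousWithinAt
  rw [intervalIntegral.integral_eq_sub_of_hasDerivAt hderiv hcont.intervalIntegrable]
  simp
  ring

end Matrix

section Scalar

variable {ι : Type*} [Fintype ι]

lemma tendsto_add_mul_log_sub (a : ℝ) :
    Tendsto (fun s : ℝ => (a + s) * Real.log (a + s) - (a + s) * Real.log s) atTop (𝓝 a) := by
  have h1 := Real.tendsto_mul_log_one_add_div_atTop a
  have h2 := (Real.tendsto_log_comp_add_sub_log a).const_mul a
  have h3 := h1.add h2
  rw [mul_zero, add_zero] at h3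
  refine h3.congr' ?_
  filter_upwards [eventually_gt_atTop 0, eventually_gt_atTop (-a)] with s hs hsa
  have : 1 + a / s = (a + s) / s := by field_simp; ring
  rw [this, Real.log_div (by linarith) hs.ne', add_comm s a]
  ring

lemma hasDerivAt_sum_mul_log (b c v : ι → ℝ) {s : ℝ} (hb : ∀ i, 0 < b i + s)
    (hv : ∀ i, 0 < v i + s) :
    HasDerivAt (fun s => ∑ i, (b i + s) * Real.log (b i + s) -
        ∑ i, (v i + s) * Real.log (v i + s) + ∑ i, c i * Real.log (b i + s))
      (∑ i, Real.log (b i + s) - ∑ i, Real.log (v i + s) + ∑ i, c i * (b i + s)⁻¹) s := by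
  have hlin : ∀ a : ℝ, HasDerivAt (fun s => a + s) 1 s := fun a => (hasDerivAt_id s).const_add a
  have hlog : ∀ a : ℝ, 0 < a + s → HasDerivAt (fun s => Real.log (a + s)) (a + s)⁻¹ s :=
    fun a ha => by simpa using (hlin a).log ha.ne'
  have hxlog : ∀ a : ℝ, 0 < a + s →
      HasDerivAt (fun s => (a + s) * Real.log (a + s)) (Real.log (a + s) + 1) s := fun a ha => by
    have := (hlin a).mul (hlog a ha)
    rwa [one_mul, mul_inv_cancel₀ ha.ne'] at this
  have h1 := HasDerivAt.fun_sum fun i (_ : i ∈ Finset.univ) => hxlog _ (hb i)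
  have h2 := HasDerivAt.fun_sum fun i (_ : i ∈ Finset.univ) => hxlog _ (hv i)
  have h3 := HasDerivAt.fun_sum fun i (_ : i ∈ Finset.univ) => (hlog _ (hb i)).const_mul (c i)
  refine ((h1.sub h2).add h3).congr_deriv ?_
  simp only [Finset.sum_add_distrib]
  ring

lemma tendsto_sum_mul_log (b c v : ι → ℝ) (hbv : ∑ i, b i = ∑ i, v i) (hc : ∑ i, c i = 0) :
    Tendsto (fun s => ∑ i, (b i + s) * Real.log (b i + s) -
        ∑ i, (v i + s) * Real.log (v i + s) + ∑ i, c i * Real.log (b i + s)) atTop (𝓝 0) := by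
  have h1 := tendsto_finsetSum Finset.univ fun i _ => tendsto_add_mul_log_sub (b i)
  have h2 := tendsto_finsetSum Finset.univ fun i _ => tendsto_add_mul_log_sub (v i)
  have h3 := tendsto_finsetSum Finset.univ fun i _ =>
    (Real.tendsto_log_comp_add_sub_log (b i)).const_mul (c i)
  have h := (h1.sub h2).add h3
  simp only [hbv, sub_self, mul_zero, Finset.sum_const_zero, add_zero] at h
  refine h.congr fun s => ?_
  simp only [mul_sub, Finset.sum_sub_distrib, ← Finset.sum_mul, hc, Finset.sum_add_distrib, hbv,
    add_comm s]
  ring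

end Scalar

lemma re_trace_mul_mlog (M : Matrix (Fin d) (Fin d) ℂ) {A : Matrix (Fin d) (Fin d) ℂ}
    (hA : A.IsHermitian) :
    (M * mlog A).trace.re = ∑ i, ((star (hA.eigenvectorUnitary : Matrix (Fin d) (Fin d) ℂ) * M *
      (hA.eigenvectorUnitary : Matrix (Fin d) (Fin d) ℂ)) i i).re *
        Real.log (hA.eigenvalues i) := by
  rw [mlog, dif_pos hA, re_trace_mul_conj_diagonal]

lemma re_trace_mul_mlog_self {A : Matrix (Fin d) (Fin d) ℂ} (hA : A.IsHermitian) :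
    (A * mlog A).trace.re = ∑ i, hA.eigenvalues i * Real.log (hA.eigenvalues i) := by
  have hU' : star (hA.eigenvectorUnitary : Matrix (Fin d) (Fin d) ℂ) *
      (hA.eigenvectorUnitary : Matrix (Fin d) (Fin d) ℂ) = 1 := Unitary.coe_star_mul_self _
  have hD : star (hA.eigenvectorUnitary : Matrix (Fin d) (Fin d) ℂ) * A *
      (hA.eigenvectorUnitary : Matrix (Fin d) (Fin d) ℂ) =
      diagonal (fun i => (hA.eigenvalues i : ℂ)) := by
    conv_lhs => enter [1, 2]; rw [hA.eq_conj_diagonal]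
    calc _ = (star (hA.eigenvectorUnitary : Matrix (Fin d) (Fin d) ℂ) *
          (hA.eigenvectorUnitary : Matrix (Fin d) (Fin d) ℂ)) *
          diagonal (fun i => (hA.eigenvalues i : ℂ)) *
          (star (hA.eigenvectorUnitary : Matrix (Fin d) (Fin d) ℂ) *
          (hA.eigenvectorUnitary : Matrix (Fin d) (Fin d) ℂ)) := by simp only [mul_assoc]
      _ = _ := by rw [hU', one_mul, mul_one]
  rw [re_trace_mul_mlog A hA, hD]
  simp

/-- The Bregman divergence of `-log det`, integrated over all shifts by positive multiples of the
identity, is the relative entropy. -/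
lemma integral_logDet_bregman {ρ σ : Matrix (Fin d) (Fin d) ℂ} (hρ : ρ.PosDef) (hσ : σ.PosDef)
    (htr : ρ.trace = σ.trace) {φ : ℝ → ℝ}
    (hφ : ∀ s, 0 ≤ s → φ s = Real.log (σ + (s : ℂ) • (1 : Matrix (Fin d) (Fin d) ℂ)).det.re -
      Real.log (ρ + (s : ℂ) • (1 : Matrix (Fin d) (Fin d) ℂ)).det.re +
      ((ρ - σ) * (σ + (s : ℂ) • (1 : Matrix (Fin d) (Fin d) ℂ))⁻¹).trace.re)
    (hφ0 : ∀ s, 0 < s → 0 ≤ φ s) :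
    IntegrableOn φ (Set.Ioi 0) ∧ ∫ s in Set.Ioi (0 : ℝ), φ s = relEnt ρ σ := by
  set U := (hσ.isHermitian.eigenvectorUnitary : Matrix (Fin d) (Fin d) ℂ)
  set b := hσ.isHermitian.eigenvalues
  set v := hρ.isHermitian.eigenvalues
  set c : Fin d → ℝ := fun i => ((star U * (ρ - σ) * U) i i).re with hc
  have hU : U * star U = 1 := Unitary.coe_mul_star_self _
  have hbpos : ∀ s, 0 ≤ s → ∀ i, 0 < b i + s :=
    fun s hs i => add_pos_of_pos_of_nonneg (hσ.eigenvalues_pos i) hs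
  have hvpos : ∀ s, 0 ≤ s → ∀ i, 0 < v i + s :=
    fun s hs i => add_pos_of_pos_of_nonneg (hρ.eigenvalues_pos i) hs
  have hbv : ∑ i, b i = ∑ i, v i := by
    rw [IsHermitian.sum_eigenvalues_eq_re_trace, IsHermitian.sum_eigenvalues_eq_re_trace, htr]
  have hc0 : ∑ i, c i = 0 := by
    rw [hc, sum_re_conj_apply _ hU, trace_sub, htr, sub_self, Complex.zero_re]
  have hderiv : ∀ s ∈ Set.Ici (0 : ℝ), HasDerivAt
      (fun s => ∑ i, (b i + s) * Real.log (b i + s) -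
        ∑ i, (v i + s) * Real.log (v i + s) + ∑ i, c i * Real.log (b i + s)) (φ s) s := by
    intro s hs
    rw [hφ s hs, hσ.isHermitian.re_det_add_smul_one, hρ.isHermitian.re_det_add_smul_one,
      Real.log_prod fun i _ => (hbpos s hs i).ne', Real.log_prod fun i _ => (hvpos s hs i).ne',
      hσ.isHermitian.inv_add_smul_one fun i => (hbpos s hs i).ne', re_trace_mul_conj_diagonal]
    exact hasDerivAt_sum_mul_log b c v (hbpos s hs) (hvpos s hs)
  have hlim := tendsto_sum_mul_log b c v hbv hc0
  refine ⟨integrableOn_Ioi_deriv_of_nonneg' hderiv hφ0 hlim, ?_⟩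
  rw [integral_Ioi_of_hasDerivAt_of_nonneg' hderiv hφ0 hlim]
  have hrel : relEnt ρ σ = (ρ * mlog ρ).trace.re - (σ * mlog σ).trace.re -
      ((ρ - σ) * mlog σ).trace.re := by
    rw [relEnt, trace_sub, Complex.sub_re, sub_mul, trace_sub, Complex.sub_re]
    ring
  rw [hrel, re_trace_mul_mlog_self hρ.isHermitian, re_trace_mul_mlog_self hσ.isHermitian,
    re_trace_mul_mlog _ hσ.isHermitian]
  simp only [add_zero]
  ring

/-- the integral representation
`D(ρ‖σ) = ∫₀¹ (1−t)·γ_{ρ_t}(ρ−σ) dt` with `ρ_t = tρ + (1−t)σ`. -/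
theorem relEnt_eq_integral_bkm
    (ρ σ : Matrix (Fin d) (Fin d) ℂ) (hρ : ρ.PosDef) (hσ : σ.PosDef)
    (hρ1 : ρ.trace = 1) (hσ1 : σ.trace = 1) :
    relEnt ρ σ =
      ∫ t in (0 : ℝ)..1, (1 - t) * bkm ((t : ℂ) • ρ + ((1 - t : ℝ) : ℂ) • σ) (ρ - σ) := by
  set X := ρ - σ with hXdef
  set A : ℝ → Matrix (Fin d) (Fin d) ℂ :=
    fun s => σ + (s : ℂ) • (1 : Matrix (Fin d) (Fin d) ℂ) with hA
  have hX : Xᴴ = X := (hρ.isHermitian.sub hσ.isHermitian).eq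
  have hline : ∀ t s : ℝ, (t : ℂ) • ρ + ((1 - t : ℝ) : ℂ) • σ +
      (s : ℂ) • (1 : Matrix (Fin d) (Fin d) ℂ) = A s + (t : ℂ) • X := fun t s => by
    rw [hA, hXdef, Complex.ofReal_sub, Complex.ofReal_one]
    module
  have hpos : ∀ s : ℝ, 0 ≤ s → ∀ t ∈ Set.Icc (0 : ℝ) 1, (A s + (t : ℂ) • X).PosDef := by
    intro s hs t ht
    rw [← hline]
    refine PosDef.add_posSemidef ?_ (PosSemidef.one.smul (by exact_mod_cast hs))
    rcases ht.1.eq_or_lt with rfl | h0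
    · simpa using hσ
    · exact (hρ.smul (by exact_mod_cast h0)).add_posSemidef
        (hσ.posSemidef.smul (by exact_mod_cast sub_nonneg.2 ht.2))
  set f : ℝ → ℝ → ℝ := fun t s =>
    (1 - t) * (X * (A s + (t : ℂ) • X)⁻¹ * X * (A s + (t : ℂ) • X)⁻¹).trace.re with hf
  have hf0 : ∀ s, 0 ≤ s → ∀ t ∈ Set.Icc (0 : ℝ) 1, 0 ≤ f t s := by
    intro s hs t ht
    refine mul_nonneg (sub_nonneg.2 ht.2) ?_
    have hR := (hpos s hs t ht).posSemidef.inv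
    have := hR.conjTranspose_mul_mul_same X
    rw [hX] at this
    exact this.re_trace_mul_nonneg hR
  have hinner : ∀ s, 0 ≤ s → ∫ t in (0 : ℝ)..1, f t s =
      Real.log (σ + (s : ℂ) • (1 : Matrix (Fin d) (Fin d) ℂ)).det.re -
      Real.log (ρ + (s : ℂ) • (1 : Matrix (Fin d) (Fin d) ℂ)).det.re +
      (X * (σ + (s : ℂ) • (1 : Matrix (Fin d) (Fin d) ℂ))⁻¹).trace.re := by
    intro s hs
    rw [integral_one_sub_mul_re_trace (A s) X (hpos s hs)]
    have h1 : A s + X = ρ + (s : ℂ) • (1 : Matrix (Fin d) (Fin d) ℂ) := by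
      rw [hA, hXdef]
      module
    rw [h1]
  obtain ⟨hint, hval⟩ := integral_logDet_bregman hρ hσ (hρ1.trans hσ1.symm) hinner
    fun s hs => intervalIntegral.integral_nonneg zero_le_one (hf0 s hs.le)
  have hcont : ContinuousOn (Function.uncurry f) (Set.Icc (0 : ℝ) 1 ×ˢ Set.Ici (0 : ℝ)) := by
    rintro ⟨t, s⟩ ⟨ht, hs⟩
    have hinv : ContinuousAt (fun p : ℝ × ℝ => (A p.2 + (p.1 : ℂ) • X)⁻¹) (t, s) :=
      ContinuousAt.comp (g := fun B : Matrix (Fin d) (Fin d) ℂ => B⁻¹)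
        (continuousAt_inv_of_det_ne_zero (hpos s hs t ht).det_pos.ne')
        (Continuous.continuousAt (by fun_prop))
    have hc : Continuous fun q : ℝ × Matrix (Fin d) (Fin d) ℂ =>
        (1 - q.1) * (X * q.2 * X * q.2).trace.re := by fun_prop
    exact (hc.continuousAt.comp (continuousAt_fst.prodMk hinv)).continuousWithinAt
  have hprod : Integrable (Function.uncurry f)
      ((volume.restrict (Set.Ioc (0 : ℝ) 1)).prod (volume.restrict (Set.Ioi (0 : ℝ)))) := by
    refine (integrable_prod_iff' ?_).2 ⟨?_, ?_⟩
    · rw [Measure.prod_restrict]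
      exact (hcont.mono (Set.prod_mono Set.Ioc_subset_Icc_self
        Set.Ioi_subset_Ici_self)).aestronglyMeasurable (measurableSet_Ioc.prod measurableSet_Ioi)
    · filter_upwards [ae_restrict_mem measurableSet_Ioi] with s hs
      have hs' : ContinuousOn (fun t => f t s) (Set.Icc (0 : ℝ) 1) :=
        hcont.comp (f := fun t : ℝ => (t, s)) (by fun_prop)
          fun t ht => ⟨ht, Set.Ioi_subset_Ici_self hs⟩
      exact hs'.integrableOn_Icc.mono_set Set.Ioc_subset_Icc_self
    · refine hint.congr ?_
      filter_upwards [ae_restrict_mem measurableSet_Ioi] with s hs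
      rw [intervalIntegral.integral_of_le zero_le_one]
      refine setIntegral_congr_fun measurableSet_Ioc fun t ht => ?_
      exact (Real.norm_of_nonneg (hf0 s hs.le t (Set.Ioc_subset_Icc_self ht))).symm
  calc relEnt ρ σ = ∫ s in Set.Ioi (0 : ℝ), ∫ t in Set.Ioc (0 : ℝ) 1, f t s := by
        rw [← hval]
        simp only [intervalIntegral.integral_of_le zero_le_one]
    _ = ∫ t in Set.Ioc (0 : ℝ) 1, ∫ s in Set.Ioi (0 : ℝ), f t s :=
        (integral_integral_swap hprod).symm
    _ = _ := by
        rw [intervalIntegral.integral_of_le zero_le_one]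
        simp only [bkm, hf, hline, hX, integral_const_mul]
end
end

section
/- Let ρ, σ be positive definite d×d density matrices with ρ ≤ c·σ for some c > 1. Then k(c)·γ_σ(ρ−σ) ≤ D(ρ‖σ) ≤ γ_σ(ρ−σ), where k(c) = (c ln c − c + 1)/(c−1)², γ is the BKM metric, and D is the quantum relative entropy. -/
open Matrix MeasureTheory
open scoped ComplexOrder

noncomputable section

variable {d : ℕ}

/-- The comparison constant `k(c) = (c ln c − c + 1)/(c−1)²`. -/
def kfun (c : ℝ) : ℝ := (c * Real.log c - c + 1) / (c - 1) ^ 2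

section RealAnalysis

open Set Filter Topology

/-- Two-point lower bounds on the increments of `h` by values of `deriv f` integrate to a lower
bound on the total increment; no regularity of `h` is needed. -/
theorem sub_le_sub_of_forall_exists_deriv_le {h f f' : ℝ → ℝ}
    (hf : ∀ t ∈ Icc (0 : ℝ) 1, HasDerivAt f (f' t) t) (hf' : ContinuousOn f' (Icc 0 1))
    (hh : ∀ u ∈ Icc (0 : ℝ) 1, ∀ t ∈ Icc (0 : ℝ) 1, u < t →
      ∃ v ∈ Icc u t, (t - u) * f' v ≤ h t - h u)
    {T : ℝ} (hT : T ∈ Icc (0 : ℝ) 1) : f T - f 0 ≤ h T - h 0 := by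
  rcases hT.1.eq_or_lt with rfl | hT0
  · simp
  refine le_of_forall_pos_le_add fun ε hε => ?_
  obtain ⟨δ, hδ, hunif⟩ := Metric.uniformContinuousOn_iff.1
    (isCompact_Icc.uniformContinuousOn_of_continuous hf') ε hε
  have hstep : ∀ u ∈ Icc (0 : ℝ) 1, ∀ t ∈ Icc (0 : ℝ) 1, u < t → t - u < δ →
      f t - f u ≤ h t - h u + ε * (t - u) := by
    intro u hu t ht hut htu
    obtain ⟨v, hv, hv'⟩ := hh u hu t ht hut
    have hsub : Icc u t ⊆ Icc 0 1 := Icc_subset_Icc hu.1 ht.2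
    obtain ⟨w, hw, hw'⟩ := exists_hasDerivAt_eq_slope f f' hut
      (fun x hx => (hf x (hsub hx)).continuousAt.continuousWithinAt)
      (fun x hx => hf x (hsub (Ioo_subset_Icc_self hx)))
    have hd : dist (f' w) (f' v) < ε := by
      refine hunif w (hsub (Ioo_subset_Icc_self hw)) v (hsub hv) ?_
      rw [Real.dist_eq, abs_lt]
      constructor <;> linarith [hw.1, hw.2, hv.1, hv.2]
    rw [Real.dist_eq, abs_lt] at hd
    rw [eq_div_iff (sub_pos.2 hut).ne'] at hw'
    nlinarith [mul_lt_mul_of_pos_right hd.2 (sub_pos.2 hut)]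
  obtain ⟨n, hn⟩ := exists_nat_gt (T / δ)
  have hn0 : (0 : ℝ) < n := (div_pos hT0 hδ).trans hn
  have hmesh : T / n < δ := by
    rw [div_lt_iff₀ hδ] at hn
    rw [div_lt_iff₀ hn0]
    linarith
  have hmesh0 : 0 < T / n := div_pos hT0 hn0
  have hind : ∀ k : ℕ, k ≤ n →
      f (k * (T / n)) - f 0 ≤ h (k * (T / n)) - h 0 + ε * (k * (T / n)) := by
    intro k
    induction k with
    | zero => simp
    | succ k ih =>
      intro hk
      have hk' : ((k + 1 : ℕ) : ℝ) ≤ n := by exact_mod_cast hk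
      have hle : ((k + 1 : ℕ) : ℝ) * (T / n) ≤ T := by
        calc ((k + 1 : ℕ) : ℝ) * (T / n) ≤ n * (T / n) := by gcongr
          _ = T := by field_simp
      push_cast at hle ⊢
      have := ih (by omega)
      have := hstep (k * (T / n)) ⟨by positivity, by nlinarith [hT.2]⟩ ((k + 1) * (T / n))
        ⟨by positivity, hle.trans hT.2⟩ (by nlinarith) (by nlinarith)
      nlinarith
  have := hind n le_rfl
  have hnT : (n : ℝ) * (T / n) = T := by field_simp
  rw [hnT] at this
  nlinarith [hT.2]

theorem affine_pos_of_mem_Icc {b t : ℝ} (hb : 0 < b) (ht : t ∈ Icc (0 : ℝ) 1) :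
    0 < 1 + (b - 1) * t := by
  rcases ht.1.eq_or_lt with rfl | h0
  · simp
  · nlinarith [ht.2, mul_pos hb h0]

/-- Integrating twice a lower bound `g / (1 + (b - 1) t)` on the second-order increments of `η`. -/
theorem kfun_mul_le_of_slope_le {η ψ : ℝ → ℝ} {b g : ℝ} (hb : 0 < b) (hb1 : b ≠ 1)
    (hη : ∀ u ∈ Icc (0 : ℝ) 1, ∀ t ∈ Icc (0 : ℝ) 1, u < t →
      ∃ v ∈ Icc u t, (t - u) * ψ v ≤ η t - η u)
    (hψ : ∀ u ∈ Icc (0 : ℝ) 1, ∀ t ∈ Icc (0 : ℝ) 1, u < t →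
      (t - u) * (g / (1 + (b - 1) * t)) ≤ ψ t - ψ u) :
    kfun b * g ≤ η 1 - η 0 - ψ 0 := by
  have hb1' : b - 1 ≠ 0 := sub_ne_zero.2 hb1
  have haff : ∀ t : ℝ, HasDerivAt (fun t => 1 + (b - 1) * t) (b - 1) t := fun t => by
    simpa using ((hasDerivAt_id t).const_mul (b - 1)).const_add 1
  have hlog : ∀ t ∈ Icc (0 : ℝ) 1, HasDerivAt (fun t => Real.log (1 + (b - 1) * t))
      ((b - 1) / (1 + (b - 1) * t)) t := fun t ht =>
    (haff t).log (affine_pos_of_mem_Icc hb ht).ne'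
  have hfirst : ∀ T ∈ Icc (0 : ℝ) 1,
      g / (b - 1) * Real.log (1 + (b - 1) * T) ≤ ψ T - ψ 0 := by
    intro T hT
    have := sub_le_sub_of_forall_exists_deriv_le (h := ψ)
      (f := fun t => g / (b - 1) * Real.log (1 + (b - 1) * t))
      (f' := fun t => g / (1 + (b - 1) * t))
      (fun t ht => by
        convert! (hlog t ht).const_mul (g / (b - 1)) using 1
        field_simp)
      (fun t ht => (continuousAt_const.div (haff t).continuousAt
        (affine_pos_of_mem_Icc hb ht).ne').continuousWithinAt)
      (fun u hu t ht hut => ⟨t, ⟨hut.le, le_rfl⟩, hψ u hu t ht hut⟩) hT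
    simpa using this
  have := sub_le_sub_of_forall_exists_deriv_le (h := η)
    (f := fun t => g / (b - 1) ^ 2 * ((1 + (b - 1) * t) * Real.log (1 + (b - 1) * t)
      - (b - 1) * t) + ψ 0 * t)
    (f' := fun t => g / (b - 1) * Real.log (1 + (b - 1) * t) + ψ 0)
    (fun t ht => by
      have ha := (affine_pos_of_mem_Icc hb ht).ne'
      convert! ((((haff t).mul (hlog t ht)).sub ((hasDerivAt_id t).const_mul (b - 1))).const_mul
        (g / (b - 1) ^ 2)).add ((hasDerivAt_id t).const_mul (ψ 0)) using 1
      field_simp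
      ring)
    (fun t ht => ((continuousAt_const.mul (hlog t ht).continuousAt).add
      continuousAt_const).continuousWithinAt)
    (fun u hu t ht hut => by
      obtain ⟨v, hv, hv'⟩ := hη u hu t ht hut
      refine ⟨v, hv, le_trans ?_ hv'⟩
      have := hfirst v ⟨hu.1.trans hv.1, hv.2.trans ht.2⟩
      exact mul_le_mul_of_nonneg_left (by linarith) (sub_pos.2 hut).le)
    (right_mem_Icc.2 zero_le_one)
  have hk : g / (b - 1) ^ 2 * (b * Real.log b - (b - 1)) = kfun b * g := by
    rw [kfun]; ring
  simp at this
  linarith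

theorem kfun_le_one {b : ℝ} (hb : 0 < b) (hb1 : b ≠ 1) : kfun b ≤ 1 := by
  have : 0 < (b - 1) ^ 2 := by
    have := sub_ne_zero.2 hb1
    positivity
  rw [kfun, div_le_one this]
  nlinarith [mul_le_mul_of_nonneg_left (Real.log_le_sub_one_of_pos hb) hb.le]

theorem integrableOn_inv_mul_inv_add {p q : ℝ} (hp : 0 < p) (hq : 0 < q) :
    IntegrableOn (fun s => (p + s)⁻¹ * (q + s)⁻¹) (Ioi 0) := by
  refine Integrable.mono' ((integrable_inv_one_add_sq.const_mul (1 / (p * q) + 1)).integrableOn)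
    (by fun_prop) ?_
  refine (ae_restrict_iff' measurableSet_Ioi).2 (.of_forall fun s hs => ?_)
  have hs : 0 < s := hs
  rw [Real.norm_of_nonneg (by positivity), ← mul_inv, ← div_eq_mul_inv, inv_eq_one_div,
    div_le_div_iff₀ (by positivity) (by positivity)]
  have h : 1 / (p * q) * (p * q) = 1 := by field_simp
  have h' : 0 < 1 / (p * q) := by positivity
  nlinarith [mul_pos hp hq, mul_pos hp hs, mul_pos hq hs, mul_pos hs hs,
    mul_pos h' (mul_pos hp hs), mul_pos h' (mul_pos hq hs), mul_pos h' (mul_pos hs hs)]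

theorem integrableOn_inv_sub_inv_add {a : ℝ} (ha : 0 < a) :
    IntegrableOn (fun s => (1 + s)⁻¹ - (a + s)⁻¹) (Ioi 0) := by
  refine IntegrableOn.congr_fun ((integrableOn_inv_mul_inv_add one_pos ha).const_mul (a - 1))
    (fun s hs => ?_) measurableSet_Ioi
  have hs : 0 < s := hs
  have : 0 < 1 + s := by positivity
  have : 0 < a + s := by positivity
  field_simp
  ring

theorem integral_inv_sub_inv_add {a : ℝ} (ha : 0 < a) :
    ∫ s in Ioi (0 : ℝ), ((1 + s)⁻¹ - (a + s)⁻¹) = Real.log a := by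
  have hlim : Tendsto (fun s : ℝ => Real.log (1 + s) - Real.log (a + s)) atTop (𝓝 0) := by
    have h1 : Tendsto (fun s : ℝ => 1 + (1 - a) * (a + s)⁻¹) atTop (𝓝 (1 + (1 - a) * 0)) :=
      ((tendsto_inv_atTop_zero.comp (tendsto_atTop_add_const_left _ a tendsto_id)).const_mul
        _).const_add _
    have h2 := (Real.continuousAt_log (by simp : (1 + (1 - a) * 0 : ℝ) ≠ 0)).tendsto.comp h1
    simp only [mul_zero, add_zero, Real.log_one] at h2
    refine h2.congr' ?_
    filter_upwards [eventually_gt_atTop 0] with s hs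
    have h3 : 0 < 1 + s := by positivity
    have h4 : 0 < a + s := by positivity
    rw [← Real.log_div h3.ne' h4.ne', Function.comp]
    congr 1
    field_simp
    ring
  have := integral_Ioi_of_hasDerivAt_of_tendsto' (a := 0)
    (f := fun s : ℝ => Real.log (1 + s) - Real.log (a + s))
    (f' := fun s => (1 + s)⁻¹ - (a + s)⁻¹) (fun s hs => by
      have hs : 0 ≤ s := hs
      have h3 : 1 + s ≠ 0 := by positivity
      have h4 : a + s ≠ 0 := by positivity
      simp only [← one_div]
      exact (((hasDerivAt_id s).const_add 1).log h3).sub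
        (((hasDerivAt_id s).const_add a).log h4))
    (integrableOn_inv_sub_inv_add ha) hlim
  simpa using this

end RealAnalysis

section Spectral

variable {A B : Matrix (Fin d) (Fin d) ℂ}

/-- The function `f` applied to the eigenvalues of the Hermitian matrix `A`. -/
def spectralMap (hA : A.IsHermitian) (f : ℝ → ℝ) : Matrix (Fin d) (Fin d) ℂ :=
  (hA.eigenvectorUnitary : Matrix (Fin d) (Fin d) ℂ) *
    Matrix.diagonal (fun i => (f (hA.eigenvalues i) : ℂ)) *
    star (hA.eigenvectorUnitary : Matrix (Fin d) (Fin d) ℂ)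

theorem mlog_eq_spectralMap (hA : A.IsHermitian) : mlog A = spectralMap hA Real.log := by
  rw [mlog, dif_pos hA, spectralMap]

theorem spectralMap_id (hA : A.IsHermitian) : spectralMap hA (fun x => x) = A := by
  conv_rhs => rw [hA.spectral_theorem]
  rfl

theorem spectralMap_one (hA : A.IsHermitian) : spectralMap hA (fun _ => 1) = 1 := by
  simp [spectralMap]

theorem spectralMap_mul (hA : A.IsHermitian) (f g : ℝ → ℝ) :
    spectralMap hA f * spectralMap hA g = spectralMap hA (fun x => f x * g x) := by
  have h : star (hA.eigenvectorUnitary : Matrix (Fin d) (Fin d) ℂ) *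
      (hA.eigenvectorUnitary : Matrix (Fin d) (Fin d) ℂ) = 1 := by simp
  simp only [spectralMap]
  calc _ = (hA.eigenvectorUnitary : Matrix (Fin d) (Fin d) ℂ) *
      diagonal (fun i => (f (hA.eigenvalues i) : ℂ)) *
      (star (hA.eigenvectorUnitary : Matrix (Fin d) (Fin d) ℂ) *
        (hA.eigenvectorUnitary : Matrix (Fin d) (Fin d) ℂ)) *
      diagonal (fun i => (g (hA.eigenvalues i) : ℂ)) *
      star (hA.eigenvectorUnitary : Matrix (Fin d) (Fin d) ℂ) := by simp only [mul_assoc]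
    _ = _ := by
      rw [h, mul_one, mul_assoc (hA.eigenvectorUnitary : Matrix (Fin d) (Fin d) ℂ),
        diagonal_mul_diagonal]
      simp

theorem spectralMap_add (hA : A.IsHermitian) (f g : ℝ → ℝ) :
    spectralMap hA f + spectralMap hA g = spectralMap hA (fun x => f x + g x) := by
  simp only [spectralMap, ← add_mul, ← mul_add, diagonal_add, Complex.ofReal_add]

theorem spectralMap_smul (hA : A.IsHermitian) (r : ℝ) (f : ℝ → ℝ) :
    (r : ℂ) • spectralMap hA f = spectralMap hA (fun x => r * f x) := by
  rw [spectralMap, ← smul_mul_assoc, ← mul_smul_comm, ← diagonal_smul, spectralMap]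
  congr 3
  ext i
  simp

theorem posSemidef_spectralMap (hA : A.IsHermitian) {f : ℝ → ℝ}
    (hf : ∀ i, 0 ≤ f (hA.eigenvalues i)) : (spectralMap hA f).PosSemidef := by
  refine PosSemidef.mul_mul_conjTranspose_same (PosSemidef.diagonal fun i => ?_) _
  exact Complex.zero_le_real.2 (hf i)

theorem spectralMap_congr (hA : A.IsHermitian) {f g : ℝ → ℝ}
    (h : ∀ i, f (hA.eigenvalues i) = g (hA.eigenvalues i)) :
    spectralMap hA f = spectralMap hA g := by
  simp only [spectralMap, h]

theorem inv_add_smul_one_eq_spectralMap (hA : A.PosDef) {s : ℝ} (hs : 0 ≤ s) :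
    (A + (s : ℂ) • (1 : Matrix (Fin d) (Fin d) ℂ))⁻¹ =
      spectralMap hA.isHermitian (fun x => (x + s)⁻¹) := by
  have hAs : A + (s : ℂ) • (1 : Matrix (Fin d) (Fin d) ℂ) =
      spectralMap hA.isHermitian (fun x => x + s) := by
    conv_lhs => rw [← spectralMap_id hA.isHermitian, ← spectralMap_one hA.isHermitian]
    rw [spectralMap_smul, spectralMap_add]
    simp
  refine inv_eq_right_inv ?_
  rw [hAs, spectralMap_mul, ← spectralMap_one hA.isHermitian]
  refine spectralMap_congr _ fun i => mul_inv_cancel₀ ?_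
  have := hA.eigenvalues_pos i
  positivity

/-- Weights of the pair of eigenbases of `A` and `B` relative to `X`. -/
def overlap (hA : A.IsHermitian) (hB : B.IsHermitian) (X : Matrix (Fin d) (Fin d) ℂ)
    (i j : Fin d) : ℝ :=
  Complex.normSq ((star (hA.eigenvectorUnitary : Matrix (Fin d) (Fin d) ℂ) * X *
    (hB.eigenvectorUnitary : Matrix (Fin d) (Fin d) ℂ)) i j)

theorem re_trace_mul_spectralMap_mul_spectralMap (hA : A.IsHermitian) (hB : B.IsHermitian)
    {X : Matrix (Fin d) (Fin d) ℂ} (hX : X.IsHermitian) (f g : ℝ → ℝ) :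
    ((X * spectralMap hA f * X * spectralMap hB g).trace).re =
      ∑ i, ∑ j, overlap hA hB X i j * (f (hA.eigenvalues i) * g (hB.eigenvalues j)) := by
  set U := (hA.eigenvectorUnitary : Matrix (Fin d) (Fin d) ℂ) with hU
  set V := (hB.eigenvectorUnitary : Matrix (Fin d) (Fin d) ℂ) with hV
  set Y := star U * X * V with hY
  have hYs : Yᴴ = star V * X * U := by
    simp only [hY, conjTranspose_mul, hX.eq, star_eq_conjTranspose, conjTranspose_conjTranspose,
      mul_assoc]
  have htr : (X * spectralMap hA f * X * spectralMap hB g).trace =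
      (diagonal (fun i => (f (hA.eigenvalues i) : ℂ)) * Y *
        diagonal (fun i => (g (hB.eigenvalues i) : ℂ)) * Yᴴ).trace := by
    rw [hYs, hY]
    simp only [spectralMap, ← hU, ← hV]
    rw [show X * (U * diagonal (fun i => (f (hA.eigenvalues i) : ℂ)) * star U) * X *
        (V * diagonal (fun i => (g (hB.eigenvalues i) : ℂ)) * star V) =
        (X * U) * (diagonal (fun i => (f (hA.eigenvalues i) : ℂ)) * star U * X *
        V * diagonal (fun i => (g (hB.eigenvalues i) : ℂ)) * star V) by simp only [mul_assoc],
      trace_mul_comm]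
    simp only [mul_assoc]
  rw [htr, trace, Complex.re_sum]
  refine Finset.sum_congr rfl fun i _ => ?_
  rw [diag_apply, mul_apply, Complex.re_sum]
  refine Finset.sum_congr rfl fun j _ => ?_
  rw [mul_diagonal, diagonal_mul, conjTranspose_apply, overlap, ← hU, ← hV, ← hY]
  rw [show (f (hA.eigenvalues i) : ℂ) * Y i j * (g (hB.eigenvalues j) : ℂ) * star (Y i j) =
    (f (hA.eigenvalues i) : ℂ) * (g (hB.eigenvalues j) : ℂ) * (Y i j * star (Y i j)) by ring,
    Complex.star_def, Complex.mul_conj]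
  norm_cast
  ring

theorem re_trace_mul_spectralMap (hA : A.IsHermitian) (X : Matrix (Fin d) (Fin d) ℂ)
    (f : ℝ → ℝ) :
    ((X * spectralMap hA f).trace).re = ∑ i, f (hA.eigenvalues i) *
      ((star (hA.eigenvectorUnitary : Matrix (Fin d) (Fin d) ℂ) * X *
        (hA.eigenvectorUnitary : Matrix (Fin d) (Fin d) ℂ)) i i).re := by
  rw [spectralMap, ← mul_assoc, trace_mul_comm, ← mul_assoc, ← mul_assoc, trace, Complex.re_sum]
  refine Finset.sum_congr rfl fun i _ => ?_
  rw [diag_apply, mul_diagonal, mul_comm, Complex.re_ofReal_mul]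

/-- Klein's inequality. -/
theorem re_trace_sub_le_relEnt (hA : A.PosDef) (hB : B.PosDef) :
    (A.trace).re - (B.trace).re ≤ relEnt A B := by
  have key := fun f g : ℝ → ℝ =>
    re_trace_mul_spectralMap_mul_spectralMap hA.isHermitian hB.isHermitian
      (isHermitian_one (n := Fin d) (α := ℂ)) f g
  simp only [one_mul, mul_one] at key
  have h1 := key (fun x => x * Real.log x) (fun _ => 1)
  have h2 := key (fun x => x) Real.log
  have h3 := key (fun x => x) (fun _ => 1)
  have h4 := key (fun _ => 1) (fun x => x)
  rw [spectralMap_one, mul_one, ← spectralMap_mul, spectralMap_id, ← mlog_eq_spectralMap] at h1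
  rw [spectralMap_id, ← mlog_eq_spectralMap] at h2
  rw [spectralMap_id, spectralMap_one, mul_one] at h3
  rw [spectralMap_id, spectralMap_one, one_mul] at h4
  rw [relEnt, trace_sub, Complex.sub_re, h1, h2, h3, h4, ← sub_nonneg]
  simp only [← Finset.sum_sub_distrib, ← mul_sub]
  refine Finset.sum_nonneg fun i _ => Finset.sum_nonneg fun j _ =>
    mul_nonneg (Complex.normSq_nonneg _) ?_
  have ha := hA.eigenvalues_pos i
  have hb := hB.eigenvalues_pos j
  set a := hA.isHermitian.eigenvalues i
  set b := hB.isHermitian.eigenvalues j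
  have hlog := Real.log_le_sub_one_of_pos (div_pos hb ha)
  rw [Real.log_div hb.ne' ha.ne'] at hlog
  have h := mul_le_mul_of_nonneg_left hlog ha.le
  have hab : a * (b / a - 1) = b - a := by field_simp
  nlinarith

theorem exists_pos_posSemidef_sub_smul (hA : A.PosDef) (hB : B.IsHermitian) :
    ∃ m : ℝ, 0 < m ∧ m < 1 ∧ (A - (m : ℂ) • B).PosSemidef := by
  obtain ⟨M, hM⟩ := (Set.finite_range hB.eigenvalues).bddAbove
  obtain ⟨N, hN⟩ := (Set.finite_range fun i => (hA.isHermitian.eigenvalues i)⁻¹).bddAbove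
  simp only [mem_upperBounds, Set.forall_mem_range] at hM hN
  set M' := max M 2
  set N' := max N 1
  have hM' : 2 ≤ M' := le_max_right _ _
  have hN' : 1 ≤ N' := le_max_right _ _
  have hMN : 2 ≤ N' * M' := by nlinarith
  refine ⟨(N' * M')⁻¹, by positivity, inv_lt_one_of_one_lt₀ (by linarith), ?_⟩
  have hA' : (A - ((N'⁻¹ : ℝ) : ℂ) • (1 : Matrix (Fin d) (Fin d) ℂ)).PosSemidef := by
    have : A - ((N'⁻¹ : ℝ) : ℂ) • (1 : Matrix (Fin d) (Fin d) ℂ) =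
        spectralMap hA.isHermitian (fun x => x + (-N'⁻¹) * 1) := by
      rw [← spectralMap_add, ← spectralMap_smul, spectralMap_id, spectralMap_one]
      simp [sub_eq_add_neg]
    rw [this]
    refine posSemidef_spectralMap _ fun i => ?_
    have h := inv_le_of_inv_le₀ (hA.eigenvalues_pos i) ((hN i).trans (le_max_left N 1))
    linarith
  have hB' : (((M' : ℝ) : ℂ) • (1 : Matrix (Fin d) (Fin d) ℂ) - B).PosSemidef := by
    have : ((M' : ℝ) : ℂ) • (1 : Matrix (Fin d) (Fin d) ℂ) - B =
        spectralMap hB (fun x => M' * 1 + (-1) * x) := by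
      rw [← spectralMap_add, ← spectralMap_smul, ← spectralMap_smul, spectralMap_id,
        spectralMap_one]
      simp [sub_eq_add_neg]
    rw [this]
    refine posSemidef_spectralMap _ fun i => ?_
    have h := (hM i).trans (le_max_left M 2)
    linarith
  have hc : (0 : ℂ) ≤ (((N' * M')⁻¹ : ℝ) : ℂ) := by
    exact_mod_cast (by positivity : (0 : ℝ) ≤ (N' * M')⁻¹)
  convert! hA'.add (hB'.smul hc) using 1
  rw [smul_sub, smul_smul, ← Complex.ofReal_mul,
    show (N' * M')⁻¹ * M' = N'⁻¹ by field_simp]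
  abel

end Spectral

section Resolvent

open Set

variable {A B P Q P' Q' X : Matrix (Fin d) (Fin d) ℂ}

theorem re_trace_mul_mul_mul_nonneg (hX : X.IsHermitian) (hP : P.PosSemidef)
    (hQ : Q.PosSemidef) : 0 ≤ ((X * P * X * Q).trace).re := by
  have h := re_trace_mul_spectralMap_mul_spectralMap hP.isHermitian hQ.isHermitian hX
    (fun x => x) (fun x => x)
  rw [spectralMap_id, spectralMap_id] at h
  rw [h]
  exact Finset.sum_nonneg fun i _ => Finset.sum_nonneg fun j _ =>
    mul_nonneg (Complex.normSq_nonneg _) (mul_nonneg (hP.eigenvalues_nonneg i)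
      (hQ.eigenvalues_nonneg j))

theorem re_trace_mul_mul_mul_mono (hX : X.IsHermitian) (hP : P.PosSemidef)
    (hQ' : Q'.PosSemidef) (hPP' : (P' - P).PosSemidef) (hQQ' : (Q' - Q).PosSemidef) :
    ((X * P * X * Q).trace).re ≤ ((X * P' * X * Q').trace).re := by
  have h1 := re_trace_mul_mul_mul_nonneg hX hPP' hQ'
  have h2 := re_trace_mul_mul_mul_nonneg hX hP hQQ'
  simp only [mul_sub, sub_mul, trace_sub, Complex.sub_re] at h1 h2
  linarith

theorem Matrix.PosDef.inv_sub_inv (hA : A.PosDef) (hB : B.PosDef) :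
    A⁻¹ - B⁻¹ = A⁻¹ * (B - A) * B⁻¹ := by
  rw [mul_sub, sub_mul, nonsing_inv_mul _ ((isUnit_iff_isUnit_det _).1 hA.isUnit), one_mul,
    mul_assoc, mul_nonsing_inv _ ((isUnit_iff_isUnit_det _).1 hB.isUnit), mul_one]

/-- Inversion of positive definite matrices is operator antitone. -/
theorem Matrix.PosDef.posSemidef_inv_sub_inv (hA : A.PosDef) (hB : B.PosDef)
    (hAB : (B - A).PosSemidef) : (A⁻¹ - B⁻¹).PosSemidef := by
  have h1 := hA.inv_sub_inv hB
  have h2 : A⁻¹ - B⁻¹ = B⁻¹ * (B - A) * A⁻¹ := by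
    rw [← neg_sub B⁻¹, hB.inv_sub_inv hA, ← neg_sub B A, mul_neg, neg_mul, neg_neg]
  have h3 : A⁻¹ - B⁻¹ = B⁻¹ * (B - A) * B⁻¹ + B⁻¹ * (B - A) * A⁻¹ * ((B - A) * B⁻¹) := by
    rw [← h2, sub_mul, ← mul_assoc, ← h1, ← mul_assoc]
    abel
  have hBi : (B⁻¹)ᴴ = B⁻¹ := hB.inv.isHermitian.eq
  have h4 := hAB.mul_mul_conjTranspose_same B⁻¹
  have h5 := hA.inv.posSemidef.mul_mul_conjTranspose_same (B⁻¹ * (B - A))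
  rw [conjTranspose_mul, hAB.isHermitian.eq, hBi] at h5
  rw [hBi] at h4
  rw [h3]
  exact h4.add h5

theorem Matrix.PosDef.add_smul_one (hA : A.PosDef) {s : ℝ} (hs : 0 ≤ s) :
    (A + (s : ℂ) • (1 : Matrix (Fin d) (Fin d) ℂ)).PosDef :=
  hA.add_posSemidef (PosSemidef.one.smul (Complex.zero_le_real.2 hs))

/-- The integrand of the Bogoliubov–Kubo–Mori metric, with two different base points. -/
def bkmIntegrand (A B X : Matrix (Fin d) (Fin d) ℂ) (s : ℝ) : ℝ :=
  ((X * (A + (s : ℂ) • (1 : Matrix (Fin d) (Fin d) ℂ))⁻¹ * X *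
    (B + (s : ℂ) • (1 : Matrix (Fin d) (Fin d) ℂ))⁻¹).trace).re

theorem bkm_eq_integral (hX : X.IsHermitian) :
    bkm A X = ∫ s in Ioi (0 : ℝ), bkmIntegrand A A X s := by
  simp only [bkm, bkmIntegrand, hX.eq]

theorem integrableOn_bkmIntegrand (hX : X.IsHermitian) (hA : A.PosDef) (hB : B.PosDef) :
    IntegrableOn (bkmIntegrand A B X) (Ioi 0) := by
  refine IntegrableOn.congr_fun (f := fun s => ∑ i, ∑ j,
    overlap hA.isHermitian hB.isHermitian X i j *
      ((hA.isHermitian.eigenvalues i + s)⁻¹ * (hB.isHermitian.eigenvalues j + s)⁻¹))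
    ?_ (fun s hs => ?_) measurableSet_Ioi
  · exact integrable_finsetSum _ fun i _ => integrable_finsetSum _ fun j _ =>
      (integrableOn_inv_mul_inv_add (hA.eigenvalues_pos i) (hB.eigenvalues_pos j)).const_mul _
  · have hs : 0 ≤ s := (mem_Ioi.1 hs).le
    rw [bkmIntegrand, inv_add_smul_one_eq_spectralMap hA hs, inv_add_smul_one_eq_spectralMap hB hs,
      re_trace_mul_spectralMap_mul_spectralMap _ _ hX]

theorem integral_bkmIntegrand_mono {A' B' : Matrix (Fin d) (Fin d) ℂ} (hX : X.IsHermitian)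
    (hA : A.PosDef) (hB : B.PosDef) (hA' : A'.PosDef) (hB' : B'.PosDef)
    (hAA' : (A' - A).PosSemidef) (hBB' : (B' - B).PosSemidef) :
    ∫ s in Ioi (0 : ℝ), bkmIntegrand A' B' X s ≤ ∫ s in Ioi (0 : ℝ), bkmIntegrand A B X s := by
  refine setIntegral_mono_on (integrableOn_bkmIntegrand hX hA' hB')
    (integrableOn_bkmIntegrand hX hA hB) measurableSet_Ioi fun s hs => ?_
  have hs : 0 ≤ s := (mem_Ioi.1 hs).le
  refine re_trace_mul_mul_mul_mono hX (hA'.add_smul_one hs).inv.posSemidef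
    (hB.add_smul_one hs).inv.posSemidef
    ((hA.add_smul_one hs).posSemidef_inv_sub_inv (hA'.add_smul_one hs) ?_)
    ((hB.add_smul_one hs).posSemidef_inv_sub_inv (hB'.add_smul_one hs) ?_)
  · rwa [add_sub_add_right_eq_sub]
  · rwa [add_sub_add_right_eq_sub]

theorem bkm_smul (hX : X.IsHermitian) (hA : A.PosDef) {a : ℝ} (ha : 0 < a) :
    bkm ((a : ℂ) • A) X = bkm A X / a := by
  have hac : (a : ℂ) ≠ 0 := Complex.ofReal_ne_zero.2 ha.ne'
  have hinv : ∀ s : ℝ, 0 ≤ s →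
      ((a : ℂ) • A + ((a * s : ℝ) : ℂ) • (1 : Matrix (Fin d) (Fin d) ℂ))⁻¹ =
        ((a⁻¹ : ℝ) : ℂ) • (A + (s : ℂ) • (1 : Matrix (Fin d) (Fin d) ℂ))⁻¹ := by
    intro s hs
    rw [Complex.ofReal_mul, ← smul_smul, ← smul_add, Complex.ofReal_inv]
    exact inv_smul' _ (Units.mk0 _ hac) ((isUnit_iff_isUnit_det _).1 (hA.add_smul_one hs).isUnit)
  have hscale : EqOn (fun s => bkmIntegrand ((a : ℂ) • A) ((a : ℂ) • A) X (a * s))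
      (fun s => a⁻¹ * a⁻¹ * bkmIntegrand A A X s) (Ioi 0) := by
    intro s hs
    simp only [bkmIntegrand, hinv s (mem_Ioi.1 hs).le, mul_smul_comm, smul_mul_assoc, smul_smul,
      trace_smul, smul_eq_mul, ← Complex.ofReal_mul, Complex.re_ofReal_mul]
  have h := integral_comp_mul_left_Ioi (bkmIntegrand ((a : ℂ) • A) ((a : ℂ) • A) X) 0 ha
  rw [setIntegral_congr_fun measurableSet_Ioi hscale, integral_const_mul, mul_zero,
    smul_eq_mul] at h
  rw [bkm_eq_integral hX, bkm_eq_integral hX]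
  field_simp at h ⊢
  linarith

theorem integrableOn_and_integral_re_trace_mul_resolvent (hA : A.PosDef)
    (X : Matrix (Fin d) (Fin d) ℂ) :
    IntegrableOn (fun s : ℝ => (1 + s)⁻¹ * (X.trace).re -
      ((X * (A + (s : ℂ) • (1 : Matrix (Fin d) (Fin d) ℂ))⁻¹).trace).re) (Ioi 0) ∧
    ∫ s in Ioi (0 : ℝ), ((1 + s)⁻¹ * (X.trace).re -
      ((X * (A + (s : ℂ) • (1 : Matrix (Fin d) (Fin d) ℂ))⁻¹).trace).re) =
      ((X * mlog A).trace).re := by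
  set x : Fin d → ℝ := fun i =>
    ((star (hA.isHermitian.eigenvectorUnitary : Matrix (Fin d) (Fin d) ℂ) * X *
      (hA.isHermitian.eigenvectorUnitary : Matrix (Fin d) (Fin d) ℂ)) i i).re
  have hint : ∀ i, IntegrableOn (fun s => ((1 + s)⁻¹ - (hA.isHermitian.eigenvalues i + s)⁻¹) * x i)
      (Ioi 0) := fun i => (integrableOn_inv_sub_inv_add (hA.eigenvalues_pos i)).mul_const _
  have heq : EqOn (fun s => ∑ i, ((1 + s)⁻¹ - (hA.isHermitian.eigenvalues i + s)⁻¹) * x i)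
      (fun s : ℝ => (1 + s)⁻¹ * (X.trace).re -
        ((X * (A + (s : ℂ) • (1 : Matrix (Fin d) (Fin d) ℂ))⁻¹).trace).re) (Ioi 0) := by
    intro s hs
    have htr := re_trace_mul_spectralMap hA.isHermitian X (fun _ => 1)
    rw [spectralMap_one, mul_one] at htr
    dsimp only
    rw [inv_add_smul_one_eq_spectralMap hA (mem_Ioi.1 hs).le, re_trace_mul_spectralMap, htr,
      Finset.mul_sum, ← Finset.sum_sub_distrib]
    refine Finset.sum_congr rfl fun i _ => ?_
    simp only [x]
    ring
  refine ⟨IntegrableOn.congr_fun (integrable_finsetSum _ fun i _ => hint i) heq measurableSet_Ioi,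
    ?_⟩
  rw [← setIntegral_congr_fun measurableSet_Ioi heq, integral_finsetSum _ fun i _ => hint i,
    mlog_eq_spectralMap hA.isHermitian, re_trace_mul_spectralMap]
  refine Finset.sum_congr rfl fun i _ => ?_
  rw [integral_mul_const, integral_inv_sub_inv_add (hA.eigenvalues_pos i)]

theorem re_trace_mul_mlog_sub (hA : A.PosDef) (hB : B.PosDef) {r : ℝ}
    (hAB : A - B = (r : ℂ) • X) :
    ((X * mlog A).trace).re - ((X * mlog B).trace).re =
      r * ∫ s in Ioi (0 : ℝ), bkmIntegrand B A X s := by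
  obtain ⟨hiA, hA'⟩ := integrableOn_and_integral_re_trace_mul_resolvent hA X
  obtain ⟨hiB, hB'⟩ := integrableOn_and_integral_re_trace_mul_resolvent hB X
  rw [← hA', ← hB', ← integral_sub hiA hiB, ← integral_const_mul]
  refine setIntegral_congr_fun measurableSet_Ioi fun s hs => ?_
  have hs : 0 ≤ s := (mem_Ioi.1 hs).le
  have h := (hB.add_smul_one hs).inv_sub_inv (hA.add_smul_one hs)
  rw [add_sub_add_right_eq_sub, hAB, mul_smul_comm, smul_mul_assoc] at h
  have h' := congrArg (fun M => ((X * M).trace).re) h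
  simp only [mul_sub, trace_sub, Complex.sub_re, mul_smul_comm, trace_smul, smul_eq_mul,
    Complex.re_ofReal_mul, ← mul_assoc] at h'
  simp only [bkmIntegrand]
  linarith

end Resolvent

/-- if `ρ ≤ c·σ` with `c > 1` then
`k(c)·γ_σ(ρ−σ) ≤ D(ρ‖σ) ≤ γ_σ(ρ−σ)`. -/
theorem relEnt_bkm_comparison
    (ρ σ : Matrix (Fin d) (Fin d) ℂ) (hρ : ρ.PosDef) (hσ : σ.PosDef)
    (hρ1 : ρ.trace = 1) (hσ1 : σ.trace = 1)
    (c : ℝ) (hc : 1 < c) (hle : ((c : ℂ) • σ - ρ).PosSemidef) :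
    kfun c * bkm σ (ρ - σ) ≤ relEnt ρ σ ∧ relEnt ρ σ ≤ bkm σ (ρ - σ) := by
  set X := ρ - σ with hXdef
  have hX : X.IsHermitian := hρ.isHermitian.sub hσ.isHermitian
  have hX0 : X.trace = 0 := by rw [hXdef, trace_sub, hρ1, hσ1, sub_self]
  set p : ℝ → Matrix (Fin d) (Fin d) ℂ := fun t => σ + (t : ℂ) • X with hp
  have hp0 : p 0 = σ := by simp [hp]
  have hp1 : p 1 = ρ := by simp [hp, hXdef]
  have hpsub : ∀ t u : ℝ, p t - p u = ((t - u : ℝ) : ℂ) • X := fun t u => by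
    simp only [hp, add_sub_add_left_eq_sub, ← sub_smul, Complex.ofReal_sub]
  have hpconv : ∀ t : ℝ, p t = ((1 - t : ℝ) : ℂ) • σ + (t : ℂ) • ρ := fun t => by
    simp only [hp, hXdef, smul_sub, Complex.ofReal_sub, sub_smul, Complex.ofReal_one, one_smul]
    abel
  have hptr : ∀ t, (p t).trace = 1 := fun t => by simp [hp, trace_add, trace_smul, hX0, hσ1]
  have hpos : ∀ t ∈ Set.Icc (0 : ℝ) 1, (p t).PosDef := by
    intro t ht
    rcases ht.1.eq_or_lt with rfl | h0
    · rwa [hp0]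
    · rw [hpconv, add_comm]
      exact (hρ.smul (Complex.zero_lt_real.2 h0)).add_posSemidef
        (hσ.posSemidef.smul (Complex.zero_le_real.2 (by linarith [ht.2])))
  set ψ : ℝ → ℝ := fun t => ((X * mlog (p t)).trace).re with hψ
  set η : ℝ → ℝ := fun t => ((p t * mlog (p t)).trace).re with hη
  have hrel : ∀ t u : ℝ, relEnt (p t) (p u) = η t - η u - (t - u) * ψ u := by
    intro t u
    have hsplit : p t = p u + ((t - u : ℝ) : ℂ) • X := by rw [← hpsub]; abel
    have h : p t * mlog (p u) = p u * mlog (p u) + ((t - u : ℝ) : ℂ) • (X * mlog (p u)) := by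
      rw [hsplit, add_mul, smul_mul_assoc]
    simp only [relEnt, h, hη, hψ, trace_sub, trace_add, trace_smul, smul_eq_mul, Complex.sub_re,
      Complex.add_re, Complex.re_ofReal_mul]
    ring
  have hklein : ∀ t ∈ Set.Icc (0 : ℝ) 1, ∀ u ∈ Set.Icc (0 : ℝ) 1,
      (t - u) * ψ u ≤ η t - η u := by
    intro t ht u hu
    have h := re_trace_sub_le_relEnt (hpos t ht) (hpos u hu)
    rw [hrel, hptr, hptr] at h
    linarith
  have hslope : ∀ t ∈ Set.Icc (0 : ℝ) 1, ∀ u ∈ Set.Icc (0 : ℝ) 1, ψ t - ψ u =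
      (t - u) * ∫ s in Set.Ioi (0 : ℝ), bkmIntegrand (p u) (p t) X s := fun t ht u hu =>
    re_trace_mul_mlog_sub (hpos t ht) (hpos u hu) (hpsub t u)
  have hdiff : ∀ b t u : ℝ, ((1 + (b - 1) * t : ℝ) : ℂ) • σ - p u =
      (u : ℂ) • ((b : ℂ) • σ - ρ) + (((b - 1) * (t - u) : ℝ) : ℂ) • σ := by
    intro b t u
    rw [hpconv]
    push_cast
    module
  have hrelρ : relEnt ρ σ = η 1 - η 0 - ψ 0 := by
    have h := hrel 1 0
    rw [hp0, hp1] at h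
    linarith
  have haff : ∀ b : ℝ, 0 < b → ∀ t ∈ Set.Icc (0 : ℝ) 1,
      (((1 + (b - 1) * t : ℝ) : ℂ) • σ).PosDef := fun b hb t ht =>
    hσ.smul (Complex.zero_lt_real.2 (affine_pos_of_mem_Icc hb ht))
  have hbkm : ∀ b : ℝ, 0 < b → ∀ t ∈ Set.Icc (0 : ℝ) 1, bkm σ X / (1 + (b - 1) * t) =
      ∫ s in Set.Ioi (0 : ℝ), bkmIntegrand (((1 + (b - 1) * t : ℝ) : ℂ) • σ)
        (((1 + (b - 1) * t : ℝ) : ℂ) • σ) X s := fun b hb t ht => by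
    rw [← bkm_smul hX hσ (affine_pos_of_mem_Icc hb ht), bkm_eq_integral hX]
  constructor
  · rw [hrelρ]
    have hc0 : 0 < c := zero_lt_one.trans hc
    refine kfun_mul_le_of_slope_le hc0 hc.ne'
      (fun u hu t ht hut => ⟨u, ⟨le_rfl, hut.le⟩, hklein t ht u hu⟩) fun u hu t ht hut => ?_
    have hdom : ∀ v ∈ Set.Icc (0 : ℝ) 1, v ≤ t →
        (((1 + (c - 1) * t : ℝ) : ℂ) • σ - p v).PosSemidef := fun v hv hvt => by
      rw [hdiff]
      exact (hle.smul (Complex.zero_le_real.2 hv.1)).add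
        (hσ.posSemidef.smul (Complex.zero_le_real.2
          (mul_nonneg (sub_nonneg.2 hc.le) (sub_nonneg.2 hvt))))
    rw [hslope t ht u hu, hbkm c hc0 t ht]
    exact mul_le_mul_of_nonneg_left (integral_bkmIntegrand_mono hX (hpos u hu) (hpos t ht)
      (haff c hc0 t ht) (haff c hc0 t ht) (hdom u hu hut.le) (hdom t ht le_rfl))
      (sub_nonneg.2 hut.le)
  · obtain ⟨m, hm0, hm1, hm⟩ := exists_pos_posSemidef_sub_smul hρ hσ.isHermitian
    have hupper := kfun_mul_le_of_slope_le (η := fun t => -η t) (ψ := fun t => -ψ t)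
      (g := -bkm σ X) hm0 hm1.ne
      (fun u hu t ht hut => ⟨t, ⟨hut.le, le_rfl⟩, by linarith [hklein u hu t ht]⟩)
      fun u hu t ht hut => by
        have hdom : ∀ v ∈ Set.Icc (0 : ℝ) 1, v ≤ t →
            (p v - ((1 + (m - 1) * t : ℝ) : ℂ) • σ).PosSemidef := fun v hv hvt => by
          have h : p v - ((1 + (m - 1) * t : ℝ) : ℂ) • σ =
              (v : ℂ) • (ρ - (m : ℂ) • σ) + (((1 - m) * (t - v) : ℝ) : ℂ) • σ := by
            rw [← neg_sub, hdiff]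
            push_cast
            module
          rw [h]
          exact (hm.smul (Complex.zero_le_real.2 hv.1)).add
            (hσ.posSemidef.smul (Complex.zero_le_real.2
              (mul_nonneg (sub_nonneg.2 hm1.le) (sub_nonneg.2 hvt))))
        have h := mul_le_mul_of_nonneg_left (integral_bkmIntegrand_mono hX (haff m hm0 t ht)
          (haff m hm0 t ht) (hpos u hu) (hpos t ht) (hdom u hu hut.le) (hdom t ht le_rfl))
          (sub_nonneg.2 hut.le)
        rw [← hslope t ht u hu, ← hbkm m hm0 t ht] at h
        rw [neg_div]
        linarith
    have hnonneg : 0 ≤ bkm σ X := by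
      rw [bkm_eq_integral hX]
      refine setIntegral_nonneg measurableSet_Ioi fun s hs => ?_
      have h := (hσ.add_smul_one (Set.mem_Ioi.1 hs).le).inv.posSemidef
      exact re_trace_mul_mul_mul_nonneg hX h h
    rw [hrelρ]
    nlinarith [mul_le_mul_of_nonneg_right (kfun_le_one hm0 hm1.ne) hnonneg]
end
end

section
/- Let t ↦ ρ_t be a smooth curve of positive definite d×d density matrices on an open interval, and define F(t) = tr(ρ_t log ρ_t). Then F′(t) = tr(ρ_t′ (log ρ_t + 1)) and F″(t) = tr(ρ_t″ (log ρ_t + 1)) + γ_{ρ_t}(ρ_t′), where γ_ρ(X) = ∫₀^∞ tr(X*(ρ+s)^{-1} X (ρ+s)^{-1}) ds. -/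
open Matrix MeasureTheory Set
open scoped ComplexOrder

attribute [local instance] Matrix.normedAddCommGroup Matrix.normedSpace

noncomputable section

variable {d : ℕ}

open Filter
open scoped Topology

theorem hasDerivAt_neg_inv_add {c s : ℝ} (h : c + s ≠ 0) :
    HasDerivAt (fun u : ℝ => -(c + u)⁻¹) (((c + s) ^ 2)⁻¹) s := by
  have := (((hasDerivAt_id s).const_add c).inv h).neg
  simpa [neg_div, Pi.neg_def, Pi.inv_def] using this

theorem tendsto_neg_inv_add_atTop (c : ℝ) :
    Tendsto (fun u : ℝ => -(c + u)⁻¹) atTop (𝓝 0) := by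
  simpa using (tendsto_inv_atTop_zero.comp (tendsto_atTop_add_const_left atTop c tendsto_id)).neg

theorem integrableOn_inv_add_sq {c : ℝ} (hc : 0 < c) :
    IntegrableOn (fun s : ℝ => ((c + s) ^ 2)⁻¹) (Ioi 0) :=
  integrableOn_Ioi_deriv_of_nonneg'
    (fun s hs => hasDerivAt_neg_inv_add (by have : 0 ≤ s := hs; positivity))
    (fun s _ => by positivity) (tendsto_neg_inv_add_atTop c)

theorem integral_inv_add_sq {c : ℝ} (hc : 0 < c) :
    ∫ s in Ioi (0 : ℝ), ((c + s) ^ 2)⁻¹ = c⁻¹ := by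
  rw [integral_Ioi_of_hasDerivAt_of_nonneg'
    (fun s hs => hasDerivAt_neg_inv_add (by have : 0 ≤ s := hs; positivity))
    (fun s _ => by positivity) (tendsto_neg_inv_add_atTop c)]
  simp

theorem hasDerivAt_log_sub_log {c s : ℝ} (hc : 0 < c) (hs : 0 ≤ s) :
    HasDerivAt (fun u : ℝ => Real.log (1 + u) - Real.log (c + u)) ((1 + s)⁻¹ - (c + s)⁻¹) s := by
  have h1 := ((hasDerivAt_id s).const_add 1).log (by simp; positivity)
  have h2 := ((hasDerivAt_id s).const_add c).log (by simp; positivity)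
  simpa only [one_div, id] using h1.fun_sub h2

theorem tendsto_log_sub_log_atTop (c : ℝ) :
    Tendsto (fun u : ℝ => Real.log (1 + u) - Real.log (c + u)) atTop (𝓝 0) := by
  have h (a : ℝ) := Real.tendsto_log_comp_add_sub_log a
  simpa [add_comm] using (h 1).sub (h c)

theorem integrableOn_inv_sub_inv {c : ℝ} (hc : 0 < c) :
    IntegrableOn (fun s : ℝ => (1 + s)⁻¹ - (c + s)⁻¹) (Ioi 0) := by
  rcases le_total 1 c with h | h
  · refine integrableOn_Ioi_deriv_of_nonneg' (fun s hs => hasDerivAt_log_sub_log hc hs)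
      (fun s (hs : 0 < s) => ?_) (tendsto_log_sub_log_atTop c)
    rw [sub_nonneg]
    gcongr
  · refine integrableOn_Ioi_deriv_of_nonpos' (fun s hs => hasDerivAt_log_sub_log hc hs)
      (fun s (hs : 0 < s) => ?_) (tendsto_log_sub_log_atTop c)
    rw [sub_nonpos]
    gcongr

theorem integral_inv_sub_inv {c : ℝ} (hc : 0 < c) :
    ∫ s in Ioi (0 : ℝ), ((1 + s)⁻¹ - (c + s)⁻¹) = Real.log c := by
  rw [integral_Ioi_of_hasDerivAt_of_tendsto' (fun s hs => hasDerivAt_log_sub_log hc hs)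
    (integrableOn_inv_sub_inv hc) (tendsto_log_sub_log_atTop c)]
  simp

theorem mul_diagonal_mul_apply (U V : Matrix (Fin d) (Fin d) ℂ) (f : Fin d → ℝ) (i j : Fin d) :
    (U * Matrix.diagonal (fun k => (f k : ℂ)) * V) i j = ∑ k, (f k : ℂ) * (U i k * V k j) := by
  rw [mul_apply]
  refine Finset.sum_congr rfl fun k _ => ?_
  rw [mul_diagonal]
  ring

/-- Entrywise integral over the positive half-line. -/
def matIntegral (M : ℝ → Matrix (Fin d) (Fin d) ℂ) : Matrix (Fin d) (Fin d) ℂ :=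
  of fun i j => ∫ s in Ioi (0 : ℝ), M s i j

/-- Entrywise integrability over the positive half-line. -/
def MatIntegrable (M : ℝ → Matrix (Fin d) (Fin d) ℂ) : Prop :=
  ∀ i j, IntegrableOn (fun s => M s i j) (Ioi 0)

theorem matIntegral_congr {M N : ℝ → Matrix (Fin d) (Fin d) ℂ} (h : ∀ s > 0, M s = N s) :
    matIntegral M = matIntegral N := by
  ext i j
  exact setIntegral_congr_fun measurableSet_Ioi fun s hs => by simp [h s hs]

theorem MatIntegrable.congr {M N : ℝ → Matrix (Fin d) (Fin d) ℂ} (hM : MatIntegrable M)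
    (h : ∀ s > 0, M s = N s) : MatIntegrable N := fun i j =>
  (hM i j).congr_fun (fun s hs => by simp [h s hs]) measurableSet_Ioi

theorem matIntegral_sub {M N : ℝ → Matrix (Fin d) (Fin d) ℂ} (hM : MatIntegrable M)
    (hN : MatIntegrable N) : matIntegral (fun s => M s - N s) = matIntegral M - matIntegral N := by
  ext i j
  exact integral_sub (hM i j) (hN i j)

theorem matIntegral_smul (c : ℝ) (M : ℝ → Matrix (Fin d) (Fin d) ℂ) :
    matIntegral (fun s => c • M s) = c • matIntegral M := by
  ext i j
  exact integral_smul c _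

theorem trace_mul_matIntegral (Y : Matrix (Fin d) (Fin d) ℂ) {M : ℝ → Matrix (Fin d) (Fin d) ℂ}
    (hM : MatIntegrable M) :
    ((Y * matIntegral M).trace).re = ∫ s in Ioi (0 : ℝ), ((Y * M s).trace).re := by
  have hint (i j : Fin d) := (hM i j).const_mul (Y j i)
  have hI : IntegrableOn (fun s => (Y * M s).trace) (Ioi 0) := by
    simp only [trace, diag, mul_apply]
    exact integrable_finsetSum _ fun i _ => integrable_finsetSum _ fun j _ => hint j i
  have h : (Y * matIntegral M).trace = ∫ s in Ioi (0 : ℝ), (Y * M s).trace := by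
    simp only [trace, diag, mul_apply, matIntegral, of_apply]
    rw [integral_finsetSum _ fun i _ => integrable_finsetSum _ fun j _ => hint j i]
    refine Finset.sum_congr rfl fun i _ => ?_
    rw [integral_finsetSum _ fun j _ => hint j i]
    exact Finset.sum_congr rfl fun j _ => (integral_const_mul _ _).symm
  rw [h]
  exact (integral_re hI).symm

theorem matIntegrable_mul_diagonal_mul (U V : Matrix (Fin d) (Fin d) ℂ)
    {f : Fin d → ℝ → ℝ} (hf : ∀ i, IntegrableOn (f i) (Ioi 0)) :
    MatIntegrable (fun s => U * Matrix.diagonal (fun i => (f i s : ℂ)) * V) := fun i j => by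
  simp only [mul_diagonal_mul_apply]
  exact integrable_finsetSum _ fun k _ => (hf k).ofReal.mul_const _

theorem matIntegral_mul_diagonal_mul (U V : Matrix (Fin d) (Fin d) ℂ)
    {f : Fin d → ℝ → ℝ} (hf : ∀ i, IntegrableOn (f i) (Ioi 0)) :
    matIntegral (fun s => U * Matrix.diagonal (fun i => (f i s : ℂ)) * V) =
      U * Matrix.diagonal (fun i => ((∫ s in Ioi (0 : ℝ), f i s : ℝ) : ℂ)) * V := by
  ext i j
  simp only [matIntegral, of_apply, mul_diagonal_mul_apply]
  rw [integral_finsetSum _ fun k _ => (hf k).ofReal.mul_const _]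
  refine Finset.sum_congr rfl fun k _ => ?_
  rw [integral_mul_const, integral_complex_ofReal]

/-- The inverse of the shifted matrix `A + s`. -/
def shiftInv (A : Matrix (Fin d) (Fin d) ℂ) (s : ℝ) : Matrix (Fin d) (Fin d) ℂ :=
  (A + (s : ℂ) • (1 : Matrix (Fin d) (Fin d) ℂ))⁻¹

theorem eigenvectorUnitary_mul_diagonal_mul_mul {A : Matrix (Fin d) (Fin d) ℂ}
    (hA : A.IsHermitian) (f g : Fin d → ℝ) :
    ((hA.eigenvectorUnitary : Matrix (Fin d) (Fin d) ℂ) * Matrix.diagonal (fun i => (f i : ℂ)) *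
        star (hA.eigenvectorUnitary : Matrix (Fin d) (Fin d) ℂ)) *
      ((hA.eigenvectorUnitary : Matrix (Fin d) (Fin d) ℂ) * Matrix.diagonal (fun i => (g i : ℂ)) *
        star (hA.eigenvectorUnitary : Matrix (Fin d) (Fin d) ℂ)) =
      (hA.eigenvectorUnitary : Matrix (Fin d) (Fin d) ℂ) *
        Matrix.diagonal (fun i => ((f i * g i : ℝ) : ℂ)) *
        star (hA.eigenvectorUnitary : Matrix (Fin d) (Fin d) ℂ) := by
  have h : star (hA.eigenvectorUnitary : Matrix (Fin d) (Fin d) ℂ) *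
      (hA.eigenvectorUnitary : Matrix (Fin d) (Fin d) ℂ) = 1 := Unitary.coe_star_mul_self _
  set U := (hA.eigenvectorUnitary : Matrix (Fin d) (Fin d) ℂ)
  calc _ = U * Matrix.diagonal (fun i => (f i : ℂ)) * (star U * U) *
        Matrix.diagonal (fun i => (g i : ℂ)) * star U := by simp only [Matrix.mul_assoc]
    _ = _ := by simp [h, Matrix.mul_assoc]

theorem eigenvectorUnitary_mul_diagonal_one {A : Matrix (Fin d) (Fin d) ℂ}
    (hA : A.IsHermitian) (c : ℝ) :
    (hA.eigenvectorUnitary : Matrix (Fin d) (Fin d) ℂ) * Matrix.diagonal (fun _ => (c : ℂ)) *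
        star (hA.eigenvectorUnitary : Matrix (Fin d) (Fin d) ℂ) = (c : ℂ) • 1 := by
  have h : (hA.eigenvectorUnitary : Matrix (Fin d) (Fin d) ℂ) *
      star (hA.eigenvectorUnitary : Matrix (Fin d) (Fin d) ℂ) = 1 := Unitary.coe_mul_star_self _
  rw [← smul_one_eq_diagonal]
  simp [h]

theorem eq_eigenvectorUnitary_mul_diagonal {A : Matrix (Fin d) (Fin d) ℂ}
    (hA : A.IsHermitian) :
    A = (hA.eigenvectorUnitary : Matrix (Fin d) (Fin d) ℂ) *
        Matrix.diagonal (fun i => (hA.eigenvalues i : ℂ)) *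
        star (hA.eigenvectorUnitary : Matrix (Fin d) (Fin d) ℂ) := by
  conv_lhs => rw [hA.spectral_theorem]
  rfl

theorem isUnit_det_add_smul {A : Matrix (Fin d) (Fin d) ℂ} (hA : A.PosDef) {s : ℝ} (hs : 0 ≤ s) :
    IsUnit (A + (s : ℂ) • (1 : Matrix (Fin d) (Fin d) ℂ)).det := by
  have : ((s : ℂ) • (1 : Matrix (Fin d) (Fin d) ℂ)).PosSemidef :=
    PosSemidef.one.smul (by exact_mod_cast hs)
  exact (hA.add_posSemidef this).det_pos.ne'.isUnit

theorem shiftInv_eq {A : Matrix (Fin d) (Fin d) ℂ} (hA : A.PosDef) {s : ℝ} (hs : 0 ≤ s) :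
    shiftInv A s = (hA.1.eigenvectorUnitary : Matrix (Fin d) (Fin d) ℂ) *
        Matrix.diagonal (fun i => (((hA.1.eigenvalues i + s)⁻¹ : ℝ) : ℂ)) *
        star (hA.1.eigenvectorUnitary : Matrix (Fin d) (Fin d) ℂ) := by
  refine inv_eq_right_inv ?_
  have h1 : A + (s : ℂ) • (1 : Matrix (Fin d) (Fin d) ℂ) =
      (hA.1.eigenvectorUnitary : Matrix (Fin d) (Fin d) ℂ) *
        Matrix.diagonal (fun i => ((hA.1.eigenvalues i + s : ℝ) : ℂ)) *
        star (hA.1.eigenvectorUnitary : Matrix (Fin d) (Fin d) ℂ) := by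
    refine (congrArg₂ (· + ·) (eq_eigenvectorUnitary_mul_diagonal hA.1)
      (eigenvectorUnitary_mul_diagonal_one hA.1 s).symm).trans ?_
    rw [← add_mul, ← mul_add, diagonal_add]
    simp
  have h2 (i) : (hA.1.eigenvalues i + s) * (hA.1.eigenvalues i + s)⁻¹ = 1 :=
    mul_inv_cancel₀ (by have := hA.eigenvalues_pos i; positivity)
  rw [h1, eigenvectorUnitary_mul_diagonal_mul_mul]
  simp only [h2, eigenvectorUnitary_mul_diagonal_one hA.1 1]
  simp

theorem mlog_eq_matIntegral {A : Matrix (Fin d) (Fin d) ℂ} (hA : A.PosDef) :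
    MatIntegrable (fun s => (((1 + s)⁻¹ : ℝ) : ℂ) • (1 : Matrix (Fin d) (Fin d) ℂ) - shiftInv A s) ∧
    matIntegral (fun s => (((1 + s)⁻¹ : ℝ) : ℂ) • (1 : Matrix (Fin d) (Fin d) ℂ) - shiftInv A s) =
      mlog A := by
  have hf (i : Fin d) := integrableOn_inv_sub_inv (hA.eigenvalues_pos i)
  have h (s : ℝ) (hs : s > 0) :
      (hA.1.eigenvectorUnitary : Matrix (Fin d) (Fin d) ℂ) *
        Matrix.diagonal (fun i => (((1 + s)⁻¹ - (hA.1.eigenvalues i + s)⁻¹ : ℝ) : ℂ)) *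
        star (hA.1.eigenvectorUnitary : Matrix (Fin d) (Fin d) ℂ) =
      (((1 + s)⁻¹ : ℝ) : ℂ) • (1 : Matrix (Fin d) (Fin d) ℂ) - shiftInv A s := by
    rw [shiftInv_eq hA hs.le, ← eigenvectorUnitary_mul_diagonal_one hA.1, ← sub_mul, ← mul_sub,
      diagonal_sub]
    simp
  refine ⟨(matIntegrable_mul_diagonal_mul _ _ hf).congr h, ?_⟩
  rw [← matIntegral_congr h, matIntegral_mul_diagonal_mul _ _ hf, mlog, dif_pos hA.1]
  simp only [integral_inv_sub_inv (hA.eigenvalues_pos _)]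

theorem matIntegral_shiftInv_mul_self {A : Matrix (Fin d) (Fin d) ℂ} (hA : A.PosDef) :
    MatIntegrable (fun s => shiftInv A s * A * shiftInv A s) ∧
    matIntegral (fun s => shiftInv A s * A * shiftInv A s) = 1 := by
  have hf (i : Fin d) := (integrableOn_inv_add_sq (hA.eigenvalues_pos i)).const_mul
    (hA.1.eigenvalues i)
  have h (s : ℝ) (hs : s > 0) :
      (hA.1.eigenvectorUnitary : Matrix (Fin d) (Fin d) ℂ) *
        Matrix.diagonal (fun i =>
          ((hA.1.eigenvalues i * ((hA.1.eigenvalues i + s) ^ 2)⁻¹ : ℝ) : ℂ)) *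
        star (hA.1.eigenvectorUnitary : Matrix (Fin d) (Fin d) ℂ) =
      shiftInv A s * A * shiftInv A s := by
    have hd (i : Fin d) : hA.1.eigenvalues i * ((hA.1.eigenvalues i + s) ^ 2)⁻¹ =
        (hA.1.eigenvalues i + s)⁻¹ * hA.1.eigenvalues i * (hA.1.eigenvalues i + s)⁻¹ := by
      rw [sq, mul_inv]
      ring
    simp only [hd]
    rw [← eigenvectorUnitary_mul_diagonal_mul_mul, ← eigenvectorUnitary_mul_diagonal_mul_mul,
      ← shiftInv_eq hA hs.le, ← eq_eigenvectorUnitary_mul_diagonal hA.1]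
  refine ⟨(matIntegrable_mul_diagonal_mul _ _ hf).congr h, ?_⟩
  rw [← matIntegral_congr h, matIntegral_mul_diagonal_mul _ _ hf]
  have h1 (i : Fin d) : ∫ s in Ioi (0 : ℝ),
      hA.1.eigenvalues i * ((hA.1.eigenvalues i + s) ^ 2)⁻¹ = 1 := by
    rw [integral_const_mul, integral_inv_add_sq (hA.eigenvalues_pos i),
      mul_inv_cancel₀ (hA.eigenvalues_pos i).ne']
  simp only [h1]
  rw [eigenvectorUnitary_mul_diagonal_one hA.1 1]
  simp

theorem shiftInv_sub_shiftInv {A B : Matrix (Fin d) (Fin d) ℂ} (hA : A.PosDef) (hB : B.PosDef)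
    {s : ℝ} (hs : 0 ≤ s) :
    shiftInv B s - shiftInv A s = shiftInv A s * (A - B) * shiftInv B s := by
  have h1 := nonsing_inv_mul _ (isUnit_det_add_smul hA hs)
  have h2 := mul_nonsing_inv _ (isUnit_det_add_smul hB hs)
  have h3 : A - B = (A + (s : ℂ) • (1 : Matrix (Fin d) (Fin d) ℂ)) - (B + (s : ℂ) • 1) := by abel
  rw [h3, mul_sub, sub_mul]
  unfold shiftInv
  rw [h1, Matrix.mul_assoc, h2, Matrix.one_mul, Matrix.mul_one]

theorem mlog_sub_mlog {A B : Matrix (Fin d) (Fin d) ℂ} (hA : A.PosDef) (hB : B.PosDef) :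
    mlog A - mlog B = matIntegral (fun s => shiftInv A s * (A - B) * shiftInv B s) := by
  rw [← (mlog_eq_matIntegral hA).2, ← (mlog_eq_matIntegral hB).2,
    ← matIntegral_sub (mlog_eq_matIntegral hA).1 (mlog_eq_matIntegral hB).1]
  refine matIntegral_congr fun s hs => ?_
  rw [← shiftInv_sub_shiftInv hA hB hs.le]
  abel

theorem norm_shiftInv_apply_le {A : Matrix (Fin d) (Fin d) ℂ} (hA : A.PosDef) {c s : ℝ}
    (hc : 0 < c) (hcA : ((A⁻¹).trace).re ≤ c⁻¹) (hs : 0 ≤ s) (i j : Fin d) :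
    ‖shiftInv A s i j‖ ≤ d * (c + s)⁻¹ := by
  have hU (i j) : ‖(hA.1.eigenvectorUnitary : Matrix (Fin d) (Fin d) ℂ) i j‖ ≤ 1 :=
    entry_norm_bound_of_unitary hA.1.eigenvectorUnitary.2 i j
  have htr : ((A⁻¹).trace).re = ∑ i, (hA.1.eigenvalues i)⁻¹ := by
    have h0 := shiftInv_eq hA le_rfl
    simp only [shiftInv, Complex.ofReal_zero, zero_smul, add_zero] at h0
    rw [h0, trace_mul_comm, ← Matrix.mul_assoc]
    have : star (hA.1.eigenvectorUnitary : Matrix (Fin d) (Fin d) ℂ) *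
      (hA.1.eigenvectorUnitary : Matrix (Fin d) (Fin d) ℂ) = 1 := Unitary.coe_star_mul_self _
    rw [this, Matrix.one_mul, trace_diagonal, Complex.re_sum]
    simp
  have hle (k : Fin d) : c ≤ hA.1.eigenvalues k := by
    rw [← inv_le_inv₀ (hA.eigenvalues_pos k) hc]
    refine le_trans ?_ (htr ▸ hcA)
    exact Finset.single_le_sum (f := fun i => (hA.1.eigenvalues i)⁻¹)
      (fun i _ => (inv_pos.2 (hA.eigenvalues_pos i)).le) (Finset.mem_univ k)
  rw [shiftInv_eq hA hs, mul_diagonal_mul_apply]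
  calc _ ≤ ∑ _k : Fin d, (c + s)⁻¹ := by
        refine norm_sum_le_of_le _ fun k _ => ?_
        have hk := hA.eigenvalues_pos k
        rw [norm_mul, norm_mul, Complex.norm_real, star_apply, norm_star, Real.norm_of_nonneg
          (by positivity)]
        calc _ ≤ (hA.1.eigenvalues k + s)⁻¹ * (1 * 1) := by
              gcongr
              · exact hU _ _
              · exact hU _ _
          _ ≤ _ := by
            rw [mul_one, mul_one]
            have := hle k
            gcongr
    _ = _ := by simp

theorem norm_mul_mul_apply_le {A X B : Matrix (Fin d) (Fin d) ℂ} {r m : ℝ}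
    (hA : ∀ i j, ‖A i j‖ ≤ r) (hX : ∀ i j, ‖X i j‖ ≤ m) (hB : ∀ i j, ‖B i j‖ ≤ r) (i j : Fin d) :
    ‖(A * X * B) i j‖ ≤ d * (d * (r * m) * r) := by
  have hAX (i k) : ‖(A * X) i k‖ ≤ d * (r * m) := by
    rw [mul_apply]
    refine (norm_sum_le_of_le (f := fun l => A i l * X l k) (n := fun _ => r * m)
      Finset.univ fun l _ => ?_).trans (by simp)
    rw [norm_mul]
    exact mul_le_mul (hA _ _) (hX _ _) (norm_nonneg _) ((norm_nonneg _).trans (hA i l))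
  rw [mul_apply]
  refine (norm_sum_le_of_le (f := fun l => (A * X) i l * B l j) (n := fun _ => d * (r * m) * r)
    Finset.univ fun l _ => ?_).trans (by simp)
  rw [norm_mul]
  exact mul_le_mul (hAX _ _) (hB _ _) (norm_nonneg _) ((norm_nonneg _).trans (hAX i l))

theorem continuousAt_inv_of_isUnit_det {A : Matrix (Fin d) (Fin d) ℂ} (hA : IsUnit A.det) :
    ContinuousAt Inv.inv A := by
  refine continuousAt_matrix_inv A ?_
  rw [Ring.inverse_eq_inv']
  exact continuousAt_inv₀ hA.ne_zero

theorem continuousOn_shiftInv {A : Matrix (Fin d) (Fin d) ℂ} (hA : A.PosDef) :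
    ContinuousOn (shiftInv A) (Ioi 0) := fun s hs => by
  refine ContinuousAt.continuousWithinAt ?_
  refine (continuousAt_inv_of_isUnit_det (isUnit_det_add_smul hA (le_of_lt hs))).comp
    (f := fun s : ℝ => A + (s : ℂ) • (1 : Matrix (Fin d) (Fin d) ℂ)) ?_
  exact Continuous.continuousAt (by fun_prop)

theorem aestronglyMeasurable_shiftInv_mul_mul_apply {A B : Matrix (Fin d) (Fin d) ℂ}
    (hA : A.PosDef) (hB : B.PosDef) (X : Matrix (Fin d) (Fin d) ℂ) (i j : Fin d) :
    AEStronglyMeasurable (fun s => (shiftInv A s * X * shiftInv B s) i j)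
      (volume.restrict (Ioi 0)) := by
  refine ContinuousOn.aestronglyMeasurable ?_ measurableSet_Ioi
  have h := ((continuousOn_shiftInv hA).mul continuousOn_const).mul (continuousOn_shiftInv hB)
    (g := shiftInv B) (f := fun s => shiftInv A s * X)
  exact (continuous_id.matrix_elem i j).comp_continuousOn h

theorem tendsto_shiftInv {ι : Type*} {l : Filter ι} {A : ι → Matrix (Fin d) (Fin d) ℂ}
    {B : Matrix (Fin d) (Fin d) ℂ} (hB : B.PosDef) (h : Tendsto A l (𝓝 B)) {s : ℝ} (hs : 0 ≤ s) :
    Tendsto (fun x => shiftInv (A x) s) l (𝓝 (shiftInv B s)) :=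
  (continuousAt_inv_of_isUnit_det (isUnit_det_add_smul hB hs)).tendsto.comp
    (h.add tendsto_const_nhds)

theorem integrableOn_sandwich_bound {c : ℝ} (hc : 0 < c) (m : ℝ) :
    IntegrableOn (fun s : ℝ => d * (d * (d * (c + s)⁻¹ * m) * (d * (c + s)⁻¹)))
      (Ioi 0) := by
  refine ((integrableOn_inv_add_sq hc).const_mul ((d : ℝ) ^ 4 * m)).congr
    (Eventually.of_forall fun s => ?_)
  simp only [sq, mul_inv]
  ring

theorem exists_pos_lt_inv (x : ℝ) : ∃ c > 0, x < c⁻¹ := by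
  obtain ⟨y, hy⟩ := exists_gt (max x 0)
  exact ⟨y⁻¹, inv_pos.2 ((le_max_right _ _).trans_lt hy),
    by simpa using (le_max_left x 0).trans_lt hy⟩

theorem matIntegrable_shiftInv_mul_mul {A : Matrix (Fin d) (Fin d) ℂ} (hA : A.PosDef)
    (X : Matrix (Fin d) (Fin d) ℂ) :
    MatIntegrable (fun s => shiftInv A s * X * shiftInv A s) := fun i j => by
  obtain ⟨c, hc, hcA⟩ := exists_pos_lt_inv ((A⁻¹).trace).re
  refine (integrableOn_sandwich_bound (d := d) hc ‖X‖).mono'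
    (aestronglyMeasurable_shiftInv_mul_mul_apply hA hA X i j) ?_
  refine (ae_restrict_iff' measurableSet_Ioi).2 (Eventually.of_forall fun s hs => ?_)
  have h := norm_shiftInv_apply_le hA hc hcA.le (le_of_lt hs)
  exact norm_mul_mul_apply_le h (fun _ _ => norm_entry_le_entrywise_sup_norm X) h i j

theorem hasDerivAt_apply {A : ℝ → Matrix (Fin d) (Fin d) ℂ} {A' : Matrix (Fin d) (Fin d) ℂ}
    {t : ℝ} (h : HasDerivAt A A' t) (i j : Fin d) :
    HasDerivAt (fun s => A s i j) (A' i j) t := by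
  rw [hasDerivAt_iff_tendsto_slope]
  exact ((continuous_id.matrix_elem i j).tendsto A').comp (hasDerivAt_iff_tendsto_slope.1 h)

/-- The derivative of the matrix logarithm along a differentiable curve of positive definite
matrices. -/
theorem hasDerivAt_mlog_apply {ρ : ℝ → Matrix (Fin d) (Fin d) ℂ}
    {X : Matrix (Fin d) (Fin d) ℂ} {t : ℝ} (hρ : ∀ᶠ s in 𝓝 t, (ρ s).PosDef)
    (hX : HasDerivAt ρ X t) (i j : Fin d) :
    HasDerivAt (fun s => mlog (ρ s) i j)
      (matIntegral (fun u => shiftInv (ρ t) u * X * shiftInv (ρ t) u) i j) t := by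
  have ht := hρ.self_of_nhds
  have hcont : Tendsto ρ (𝓝[≠] t) (𝓝 (ρ t)) := hX.continuousAt.tendsto.mono_left inf_le_left
  have hslope := hasDerivAt_iff_tendsto_slope.1 hX
  have hρ' : ∀ᶠ s in 𝓝[≠] t, (ρ s).PosDef := hρ.filter_mono inf_le_left
  obtain ⟨c, hc, hcA⟩ := exists_pos_lt_inv (((ρ t)⁻¹).trace).re
  have hinv : ∀ᶠ s in 𝓝[≠] t, (((ρ s)⁻¹).trace).re < c⁻¹ := by
    have h1 : Tendsto (fun s => (ρ s)⁻¹) (𝓝[≠] t) (𝓝 (ρ t)⁻¹) :=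
      (continuousAt_inv_of_isUnit_det ht.det_pos.ne'.isUnit).tendsto.comp hcont
    have h2 : Continuous fun M : Matrix (Fin d) (Fin d) ℂ => (M.trace).re :=
      Complex.continuous_re.comp continuous_id.matrix_trace
    exact ((h2.tendsto _).comp h1).eventually_lt_const hcA
  have hbdd : ∀ᶠ s in 𝓝[≠] t, ∀ k l, ‖slope ρ t s k l‖ ≤ ‖X‖ + 1 := by
    refine eventually_all.2 fun k => eventually_all.2 fun l => ?_
    have h1 : Tendsto (fun s => ‖slope ρ t s k l‖) (𝓝[≠] t) (𝓝 ‖X k l‖) :=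
      (((continuous_id.matrix_elem k l).tendsto X).comp hslope).norm
    refine (h1.eventually_lt_const ?_).mono fun _ => le_of_lt
    exact (norm_entry_le_entrywise_sup_norm X).trans_lt (lt_add_one _)
  rw [hasDerivAt_iff_tendsto_slope]
  have heq : ∀ᶠ s in 𝓝[≠] t,
      ∫ u in Ioi (0 : ℝ), (shiftInv (ρ s) u * slope ρ t s * shiftInv (ρ t) u) i j =
        slope (fun s => mlog (ρ s) i j) t s := by
    filter_upwards [hρ'] with s hs
    have h : matIntegral (fun u => shiftInv (ρ s) u * slope ρ t s * shiftInv (ρ t) u) =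
        (s - t)⁻¹ • (mlog (ρ s) - mlog (ρ t)) := by
      rw [mlog_sub_mlog hs ht, ← matIntegral_smul]
      simp [slope_def_module]
    exact congrFun (congrFun h i) j
  refine Tendsto.congr' heq ?_
  refine tendsto_integral_filter_of_dominated_convergence
    (fun u => d * (d * (d * (c + u)⁻¹ * (‖X‖ + 1)) * (d * (c + u)⁻¹))) ?_ ?_
    (integrableOn_sandwich_bound hc _) ?_
  · filter_upwards [hρ'] with s hs
    exact aestronglyMeasurable_shiftInv_mul_mul_apply hs ht _ i j
  · filter_upwards [hρ', hinv, hbdd] with s hs hsc hsX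
    refine (ae_restrict_iff' measurableSet_Ioi).2 (Eventually.of_forall fun u hu => ?_)
    exact norm_mul_mul_apply_le (norm_shiftInv_apply_le hs hc hsc.le (le_of_lt hu)) hsX
      (norm_shiftInv_apply_le ht hc hcA.le (le_of_lt hu)) i j
  · refine (ae_restrict_iff' measurableSet_Ioi).2 (Eventually.of_forall fun u hu => ?_)
    have h := ((tendsto_shiftInv ht hcont (le_of_lt hu)).mul hslope).mul
      (tendsto_const_nhds (x := shiftInv (ρ t) u))
    exact ((continuous_id.matrix_elem i j).tendsto _).comp h

theorem hasDerivAt_re_trace_mul {A B : ℝ → Matrix (Fin d) (Fin d) ℂ}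
    {A' B' : Matrix (Fin d) (Fin d) ℂ} {t : ℝ}
    (hA : ∀ i j, HasDerivAt (fun s => A s i j) (A' i j) t)
    (hB : ∀ i j, HasDerivAt (fun s => B s i j) (B' i j) t) :
    HasDerivAt (fun s => ((A s * B s).trace).re)
      (((A' * B t).trace).re + ((A t * B').trace).re) t := by
  rw [← Complex.add_re]
  suffices h : HasDerivAt (fun s => (A s * B s).trace) ((A' * B t).trace + (A t * B').trace) t from
    Complex.reCLM.hasFDerivAt.comp_hasDerivAt t h
  simp only [trace, diag, mul_apply, ← Finset.sum_add_distrib]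
  exact HasDerivAt.fun_sum fun i _ => HasDerivAt.fun_sum fun j _ => (hA i j).mul (hB j i)

theorem isHermitian_of_hasDerivAt {ρ : ℝ → Matrix (Fin d) (Fin d) ℂ}
    {X : Matrix (Fin d) (Fin d) ℂ} {t : ℝ} (hρ : ∀ᶠ s in 𝓝 t, (ρ s).IsHermitian)
    (hX : HasDerivAt ρ X t) : X.IsHermitian := by
  ext i j
  refine HasDerivAt.unique (f := fun s => ρ s i j) (x := t) ?_ (hasDerivAt_apply hX i j)
  refine (hasDerivAt_apply hX j i).star.congr_of_eventuallyEq ?_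
  filter_upwards [hρ] with s hs
  exact (hs.apply i j).symm

/-- first and second derivatives of the entropy functional
`F(t) = tr(ρ_t log ρ_t)` along a smooth curve of positive definite density matrices:
`F′(t) = tr(ρ_t′(log ρ_t + 1))` and `F″(t) = tr(ρ_t″(log ρ_t + 1)) + γ_{ρ_t}(ρ_t′)`. -/
theorem entropy_derivatives_along_curve
    (a b : ℝ) (ρ ρ' ρ'' : ℝ → Matrix (Fin d) (Fin d) ℂ)
    (hpos : ∀ t ∈ Ioo a b, (ρ t).PosDef)
    (htr : ∀ t ∈ Ioo a b, (ρ t).trace = 1)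
    (hderiv1 : ∀ t ∈ Ioo a b, HasDerivAt ρ (ρ' t) t)
    (hderiv2 : ∀ t ∈ Ioo a b, HasDerivAt ρ' (ρ'' t) t) :
    ∀ t ∈ Ioo a b,
      HasDerivAt (fun s => ((ρ s * mlog (ρ s)).trace).re)
        (((ρ' t * (mlog (ρ t) + 1)).trace).re) t ∧
      HasDerivAt (fun s => ((ρ' s * (mlog (ρ s) + 1)).trace).re)
        ((((ρ'' t) * (mlog (ρ t) + 1)).trace).re + bkm (ρ t) (ρ' t)) t := by
  intro t ht
  have hev : ∀ᶠ s in 𝓝 t, (ρ s).PosDef :=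
    mem_of_superset (Ioo_mem_nhds ht.1 ht.2) hpos
  have hpt := hpos t ht
  have hlog := hasDerivAt_mlog_apply hev (hderiv1 t ht)
  have hint := matIntegrable_shiftInv_mul_mul hpt (ρ' t)
  constructor
  · convert hasDerivAt_re_trace_mul (hasDerivAt_apply (hderiv1 t ht)) hlog using 1
    rw [mul_add, trace_add, Complex.add_re, ← (matIntegral_shiftInv_mul_self hpt).2,
      trace_mul_matIntegral _ (matIntegral_shiftInv_mul_self hpt).1, trace_mul_matIntegral _ hint]
    congr 2
    ext s
    rw [← Matrix.mul_assoc, trace_mul_comm, ← Matrix.mul_assoc, ← Matrix.mul_assoc,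
      ← Matrix.mul_assoc, trace_mul_comm]
    simp only [Matrix.mul_assoc]
  · convert hasDerivAt_re_trace_mul (hasDerivAt_apply (hderiv2 t ht))
      (B := fun s => mlog (ρ s) + 1) (fun i j => (hlog i j).add_const _) using 2
    rw [trace_mul_matIntegral _ hint, bkm,
      (isHermitian_of_hasDerivAt (hev.mono fun _ h => h.1) (hderiv1 t ht)).eq]
    simp only [shiftInv, Matrix.mul_assoc]
end
end
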